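/- arXiv:1111.1011 — 2 statements merged into one kernel-verified Lean document; each statement's English description precedes it below -/
import Mathlib

section
/- For every k∈ℕ, the k-stratified state reachability problem for DCPSs is decidable: for every DCPS M=(Q,Γ,Δ,q₀,γ₀) and every set F⊆Q, it is decidable whether there exists a state q∈F that is k-stratified reachable by M. -/
namespace DCPSFormal

/-- Rules of a dynamic network of concurrent pushdown systems (DCPS):
creation rules `⟨q,γ⟩ → ⟨q',u⟩ ▷ α` (with `α = none` meaning `ε`),
interruption rules `⟨q,γ⟩ ↦ ⟨q',u⟩`, and resumption rules `q ↦ q' ◁ γ`. -/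
inductive Rule (Q Γ : Type*) where
  | cr : Q → Γ → Q → List Γ → Option Γ → Rule Q Γ
  | intr : Q → Γ → Q → List Γ → Rule Q Γ
  | res : Q → Γ → Q → Rule Q Γ

/-- A DCPS: a set of rules, an initial state and an initial stack symbol. -/
structure DCPS (Q Γ : Type*) where
  rules : Set (Rule Q Γ)
  q0 : Q
  γ0 : Γ

/-- Well-formedness of a DCPS: every pushed word has length at most 2. -/
def IsDCPSWf {Q Γ : Type*} (M : DCPS Q Γ) : Prop :=
  ∀ r ∈ M.rules,
    match r with
    | .cr _ _ _ u _ => u.length ≤ 2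
    | .intr _ _ _ u => u.length ≤ 2
    | .res _ _ _ => True

/-- A DCFS is a DCPS in which every pushed word has length at most 1. -/
def IsDCFS {Q Γ : Type*} (M : DCPS Q Γ) : Prop :=
  ∀ r ∈ M.rules,
    match r with
    | .cr _ _ _ u _ => u.length ≤ 1
    | .intr _ _ _ u => u.length ≤ 1
    | .res _ _ _ => True

/-- A configuration of a DCPS: global state, optional active local configuration
(stack content and switch number), and a finitely supported multiset of pending
local configurations. -/
structure Config (Q Γ : Type*) where
  state : Q
  active : Option (List Γ × ℕ)
  idle : (List Γ × ℕ) →₀ ℕ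

/-- The thread possibly spawned by a creation rule with creation component `α`
when the active thread has switch number `i`. -/
noncomputable def spawnOf {Γ : Type*} (α : Option Γ) (i : ℕ) : (List Γ × ℕ) →₀ ℕ :=
  match α with
  | none => 0
  | some a => Finsupp.single ([a], i + 1) 1

/-- The transition system `T(M)` of a DCPS, with steps labelled by rules. -/
inductive Step {Q Γ : Type*} (M : DCPS Q Γ) : Rule Q Γ → Config Q Γ → Config Q Γ → Prop
  | cr {q γ q' u α w i V} :
      Rule.cr q γ q' u α ∈ M.rules →
      Step M (.cr q γ q' u α) ⟨q, some (γ :: w, i), V⟩ ⟨q', some (u ++ w, i), V + spawnOf α i⟩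
  | intr {q γ q' u w i V} :
      Rule.intr q γ q' u ∈ M.rules →
      Step M (.intr q γ q' u) ⟨q, some (γ :: w, i), V⟩
        ⟨q', none, V + Finsupp.single (u ++ w, i + 1) 1⟩
  | res {q γ q' w i V} :
      Rule.res q γ q' ∈ M.rules →
      Step M (.res q γ q') ⟨q, none, V + Finsupp.single (γ :: w, i) 1⟩ ⟨q', some (γ :: w, i), V⟩

/-- `c ∈ Conf_I(M)`: the active thread exists and its switch number lies in `I`. -/
def ActiveIn {Q Γ : Type*} (I : Set ℕ) (c : Config Q Γ) : Prop :=
  ∃ w i, c.active = some (w, i) ∧ i ∈ I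

/-- The `I`-bounded transition system `T_I(M)`. -/
def StepIn {Q Γ : Type*} (M : DCPS Q Γ) (I : Set ℕ) (r : Rule Q Γ) (c c' : Config Q Γ) : Prop :=
  Step M r c c' ∧ (ActiveIn I c ∨ ActiveIn I c')

/-- Reachability in `T(M)`. -/
def Reaches {Q Γ : Type*} (M : DCPS Q Γ) : Config Q Γ → Config Q Γ → Prop :=
  Relation.ReflTransGen (fun a b => ∃ r, Step M r a b)

/-- Reachability in `T_I(M)`. -/
def ReachesIn {Q Γ : Type*} (M : DCPS Q Γ) (I : Set ℕ) : Config Q Γ → Config Q Γ → Prop :=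
  Relation.ReflTransGen (fun a b => ∃ r, StepIn M I r a b)

/-- The initial configuration of a DCPS. -/
noncomputable def initConfig {Q Γ : Type*} (M : DCPS Q Γ) : Config Q Γ :=
  ⟨M.q0, none, Finsupp.single ([M.γ0], 0) 1⟩

/-- `q` is reachable by `M`. -/
def StateReachable {Q Γ : Type*} (M : DCPS Q Γ) (q : Q) : Prop :=
  ∃ c, Reaches M (initConfig M) c ∧ c.active = none ∧ c.state = q

/-- `q` is `k`-bounded reachable by `M`. -/
def KBoundedReachable {Q Γ : Type*} (M : DCPS Q Γ) (k : ℕ) (q : Q) : Prop :=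
  ∃ c, ReachesIn M {i | i ≤ k} (initConfig M) c ∧ c.active = none ∧ c.state = q

/-- `q` is `k`-stratified reachable by `M`. -/
def KStratifiedReachable {Q Γ : Type*} (M : DCPS Q Γ) (k : ℕ) (q : Q) : Prop :=
  ∃ c : ℕ → Config Q Γ, c 0 = initConfig M ∧
    (∀ l ≤ k, ReachesIn M {l} (c l) (c (l + 1))) ∧
    (c (k + 1)).active = none ∧ (c (k + 1)).state = q

/-- A labelled run in a labelled transition system. -/
inductive LRun {C L : Type*} (step : L → C → C → Prop) : List L → C → C → Prop
  | nil (c) : LRun step [] c c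
  | cons {l τ c c' c''} : step l c c' → LRun step τ c' c'' → LRun step (l :: τ) c c''

/-- A pushdown automaton with states `S`, input alphabet `A` and stack alphabet `Γ`. -/
structure PDA (S A Γ : Type*) where
  trans : Set ((S × Γ) × Option A × (S × List Γ))
  p0 : S
  γ0 : Γ
  final : Set S

/-- A single (possibly `ε`-labelled) step of a PDA. -/
inductive PDAStep {S A Γ : Type*} (P : PDA S A Γ) :
    Option A → (S × List Γ) → (S × List Γ) → Prop
  | mk {p γ a p' u w} : ((p, γ), a, (p', u)) ∈ P.trans →
      PDAStep P a (p, γ :: w) (p', u ++ w)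

/-- A run of a PDA labelled by the word obtained by concatenating all non-`ε` labels. -/
inductive PDATrace {S A Γ : Type*} (P : PDA S A Γ) :
    List A → (S × List Γ) → (S × List Γ) → Prop
  | nil (c) : PDATrace P [] c c
  | eps {v c c' c''} : PDAStep P none c c' → PDATrace P v c' c'' → PDATrace P v c c''
  | cons {a v c c' c''} : PDAStep P (some a) c c' → PDATrace P v c' c'' →
      PDATrace P (a :: v) c c''

/-- The language of a PDA (acceptance by final state). -/
def PDALang {S A Γ : Type*} (P : PDA S A Γ) : Set (List A) :=
  { v | ∃ p w, p ∈ P.final ∧ PDATrace P v (P.p0, [P.γ0]) (p, w) }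

/-- A finite state automaton. -/
structure FSA (S A : Type*) where
  trans : Set (S × Option A × S)
  init : Set S
  final : Set S

/-- A run of an FSA labelled by a word (`ε`-labels contribute nothing). -/
inductive FSARun {S A : Type*} (Au : FSA S A) : List A → S → S → Prop
  | nil (s) : FSARun Au [] s s
  | eps {v s s' s''} : (s, none, s') ∈ Au.trans → FSARun Au v s' s'' → FSARun Au v s s''
  | cons {a v s s' s''} : (s, some a, s') ∈ Au.trans → FSARun Au v s' s'' →
      FSARun Au (a :: v) s s''

/-- The language of an FSA. -/
def FSALang {S A : Type*} (Au : FSA S A) : Set (List A) :=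
  { v | ∃ s ∈ Au.init, ∃ s' ∈ Au.final, FSARun Au v s s' }

/-- A vector addition system with states of dimension `n`. -/
structure VASS (n : ℕ) (S A : Type*) where
  δ : S → A → S × (Fin n → ℤ)
  s0 : S
  v0 : Fin n → ℕ

/-- A step of a VASS: `(q₁,u₁) →ᵃ (q₂,u₂)` iff `δ(q₁,a) = (q₂, u₂ - u₁)`. -/
def VStep {n : ℕ} {S A : Type*} (V : VASS n S A) (a : A) :
    (S × (Fin n → ℕ)) → (S × (Fin n → ℕ)) → Prop :=
  fun c c' => (V.δ c.1 a).1 = c'.1 ∧ ∀ i, (c'.2 i : ℤ) = (c.2 i : ℤ) + (V.δ c.1 a).2 i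

/-- Reachability in the transition system of a VASS. -/
def VReaches {n : ℕ} {S A : Type*} (V : VASS n S A) :
    (S × (Fin n → ℕ)) → (S × (Fin n → ℕ)) → Prop :=
  Relation.ReflTransGen (fun c c' => ∃ a, VStep V a c c')

/-- A state `s` is reachable by the VASS `V`. -/
def VStateReachable {n : ℕ} {S A : Type*} (V : VASS n S A) (s : S) : Prop :=
  ∃ u, VReaches V (V.s0, V.v0) (s, u)

/-- The `i`-th unit vector. -/
def unitVec {m : ℕ} (i : Fin m) : Fin m → ℤ := fun j => if j = i then 1 else 0

/-- Encoded rules of a DCPS over natural-number states and stack symbols: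
`inl` encodes a creation rule, `inr (inl _)` an interruption rule, and
`inr (inr _)` a resumption rule. -/
abbrev RuleE := ((ℕ × ℕ) × (ℕ × List ℕ) × Option ℕ) ⊕
  (((ℕ × ℕ) × (ℕ × List ℕ)) ⊕ (ℕ × ℕ × ℕ))

/-- Decoding an encoded rule. -/
def decodeRule : RuleE → Rule ℕ ℕ
  | .inl ((q, γ), (q', u), α) => .cr q γ q' u α
  | .inr (.inl ((q, γ), (q', u))) => .intr q γ q' u
  | .inr (.inr (q, γ, q')) => .res q γ q'

/-- An instance of the reachability problems: a finite list of rules, an initial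
state and an initial stack symbol, and a target set `F` given as a list of states. -/
abbrev Inst := List RuleE × (ℕ × ℕ) × List ℕ

/-- The DCPS described by an instance. -/
def instDCPS (x : Inst) : DCPS ℕ ℕ where
  rules := { r | ∃ e ∈ x.1, decodeRule e = r }
  q0 := x.2.1.1
  γ0 := x.2.1.2

/-! ## Life relation -/

abbrev Edge := ℕ × ℕ × ℕ
abbrev Ctl := Option (ℕ × Option (ℕ × ℕ))

/-- `LR M c w I`: from control `c` with stack `w` the thread together with its selected
descendants can perform the multiset `I` of edges, ending in an idle control. -/
inductive LR (M : DCPS ℕ ℕ) : Ctl → List ℕ → Multiset Edge → Prop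
  | dead (w) : LR M none w 0
  | halt (j w) : LR M (some (j, none)) w 0
  | res {j q γ q' w I} : Rule.res q γ q' ∈ M.rules →
      LR M (some (j, some (q, q'))) (γ :: w) I → LR M (some (j + 1, none)) (γ :: w) I
  | cr {j s q γ q' u w I} : Rule.cr q γ q' u none ∈ M.rules →
      LR M (some (j, some (s, q'))) (u ++ w) I → LR M (some (j, some (s, q))) (γ :: w) I
  | crs {j s q γ q' u a w I1 I2} : Rule.cr q γ q' u (some a) ∈ M.rules →
      LR M (some (j, none)) [a] I1 →
      LR M (some (j, some (s, q'))) (u ++ w) I2 →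
      LR M (some (j, some (s, q))) (γ :: w) (I1 + I2)
  | intr {j s q γ q' u w I} : Rule.intr q γ q' u ∈ M.rules →
      LR M (some (j, none)) (u ++ w) I →
      LR M (some (j, some (s, q))) (γ :: w) ((j, s, q') ::ₘ I)

def lvlOK : Ctl → Multiset Edge → Prop
  | none, I => I = 0
  | some (j, none), I => ∀ e ∈ I, e.1 < j
  | some (j, some (s, _)), I => ∃ q' I', I = (j, s, q') ::ₘ I' ∧ ∀ e ∈ I', e.1 < j

theorem LR.lvl {M : DCPS ℕ ℕ} {c w I} (h : LR M c w I) : lvlOK c I := by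
  induction h with
  | dead w => rfl
  | halt j w => simp [lvlOK]
  | res _ _ ih =>
    obtain ⟨q', I', rfl, h⟩ := ih
    intro e he
    rcases Multiset.mem_cons.1 he with rfl | he
    · simp
    · have := h e he; omega
  | cr _ _ ih => exact ih
  | crs _ _ _ ih1 ih2 =>
    obtain ⟨q', I', rfl, h⟩ := ih2
    refine ⟨q', _ + I', (Multiset.add_cons _ _ _), ?_⟩
    intro e he
    rcases Multiset.mem_add.1 he with he | he
    · exact ih1 e he
    · exact h e he
  | intr _ _ ih => exact ⟨_, _, rfl, ih⟩

/-- Stratified runs, inductively. -/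
inductive SR (M : DCPS ℕ ℕ) : ℕ → ℕ → Config ℕ ℕ → ℕ → Prop
  | done {l c} : c.active = none → SR M l 0 c c.state
  | next {l m c q} : SR M (l + 1) m c q → SR M l (m + 1) c q
  | step {l m c c' r q} : StepIn M {l} r c c' → SR M l (m + 1) c' q → SR M l (m + 1) c q

theorem SR.of_reaches {M : DCPS ℕ ℕ} {l m c c' q} (h : ReachesIn M {l} c c')
    (h' : SR M l (m + 1) c' q) : SR M l (m + 1) c q := by
  induction h using Relation.ReflTransGen.head_induction_on with
  | refl => exact h'
  | head h1 _ ih => obtain ⟨r, hr⟩ := h1; exact SR.step hr ih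

theorem SR_iff {M : DCPS ℕ ℕ} {q} : ∀ m l c, SR M l m c q ↔
    ∃ cs : ℕ → Config ℕ ℕ, cs 0 = c ∧ (∀ i < m, ReachesIn M {l + i} (cs i) (cs (i + 1))) ∧
      (cs m).active = none ∧ (cs m).state = q := by
  intro m l c
  constructor
  · intro h
    induction h with
    | @done l c h => exact ⟨fun _ => c, rfl, by simp, h, rfl⟩
    | @next l m c q _ ih =>
      obtain ⟨cs, h0, h1, h2, h3⟩ := ih
      refine ⟨fun i => match i with | 0 => c | i + 1 => cs i, rfl, ?_, h2, h3⟩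
      intro i hi
      cases i with
      | zero => simp only [h0]; exact Relation.ReflTransGen.refl
      | succ i =>
        have := h1 i (by omega)
        rw [show l + 1 + i = l + (i + 1) by omega] at this
        exact this
    | @step l m c c' r q hs _ ih =>
      obtain ⟨cs, h0, h1, h2, h3⟩ := ih
      refine ⟨fun i => match i with | 0 => c | i + 1 => cs (i + 1), rfl, ?_, h2, h3⟩
      intro i hi
      cases i with
      | zero =>
        have := h1 0 (by omega)
        rw [h0] at this
        exact Relation.ReflTransGen.head ⟨r, hs⟩ this
      | succ i => exact h1 (i + 1) hi
  · induction m generalizing l c with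
    | zero =>
      rintro ⟨cs, rfl, _, h2, rfl⟩
      exact SR.done h2
    | succ m ih =>
      rintro ⟨cs, rfl, h1, h2, h3⟩
      have h0 := h1 0 (by omega)
      refine SR.of_reaches h0 (SR.next (ih _ _ ⟨fun i => cs (i + 1), rfl, ?_, h2, h3⟩))
      intro i hi
      have := h1 (i + 1) (by omega)
      rw [show l + (i + 1) = l + 1 + i by omega] at this
      exact this

theorem KStrat_iff_SR {M : DCPS ℕ ℕ} {k q} :
    KStratifiedReachable M k q ↔ SR M 0 (k + 1) (initConfig M) q := by
  rw [SR_iff]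
  constructor
  · rintro ⟨c, h0, h1, h2⟩
    exact ⟨c, h0, fun i hi => by simpa using h1 i (by omega), h2⟩
  · rintro ⟨c, h0, h1, h2⟩
    exact ⟨c, h0, fun i hi => by simpa using h1 i (by omega), h2⟩

theorem SR.nexts {M : DCPS ℕ ℕ} {m c q} : ∀ d l, SR M (l + d) m c q → SR M l (m + d) c q := by
  intro d
  induction d with
  | zero => intro l h; exact h
  | succ d ih =>
    intro l h
    refine SR.next (ih (l + 1) ?_)
    rwa [show l + 1 + d = l + (d + 1) by omega]

/-- Promises for a pool of idle threads. -/
def Prom (M : DCPS ℕ ℕ) (k : ℕ) (V : Multiset (List ℕ × ℕ)) (I : Multiset Edge) : Prop :=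
  ∃ P : Multiset ((List ℕ × ℕ) × Multiset Edge), P.map Prod.fst = V ∧ (P.map Prod.snd).sum = I ∧
    ∀ p ∈ P, LR M (some (k + 1 - p.1.2, none)) p.1.1 p.2

theorem Prom.zero (M : DCPS ℕ ℕ) (k : ℕ) (V) : Prom M k V 0 := by
  refine ⟨V.map (fun t => (t, 0)), by simp, by simp, ?_⟩
  intro p hp
  obtain ⟨t, _, rfl⟩ := Multiset.mem_map.1 hp
  exact LR.halt _ _

theorem Prom.cons {M : DCPS ℕ ℕ} {k V I} {w : List ℕ} {i : ℕ} {I1}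
    (h1 : LR M (some (k + 1 - i, none)) w I1)
    (h : Prom M k V I) : Prom M k (V + {(w, i)}) (I1 + I) := by
  obtain ⟨P, rfl, rfl, hP⟩ := h
  refine ⟨((w, i), I1) ::ₘ P, ?_, by simp, ?_⟩
  · simp [Multiset.add_comm]
  · intro p hp
    rcases Multiset.mem_cons.1 hp with rfl | hp
    · exact h1
    · exact hP p hp

theorem Prom.uncons {M : DCPS ℕ ℕ} {k V I} {w : List ℕ} {i : ℕ}
    (h : Prom M k (V + {(w, i)}) I) :
    ∃ I1 I2, I = I1 + I2 ∧ LR M (some (k + 1 - i, none)) w I1 ∧ Prom M k V I2 := by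
  classical
  obtain ⟨P, h0, rfl, hP⟩ := h
  rw [Multiset.add_comm, Multiset.singleton_add] at h0
  rw [← Multiset.map_eq_cons] at h0
  obtain ⟨p, hp, hp1, hp2⟩ := h0
  refine ⟨p.2, ((P.erase p).map Prod.snd).sum, ?_, ?_, P.erase p, hp2, rfl, ?_⟩
  · conv_lhs => rw [← Multiset.cons_erase hp]
    simp
  · have := hP p hp
    rw [hp1] at this
    exact this
  · intro p' hp'
    exact hP p' (Multiset.mem_of_mem_erase hp')

theorem Prom.find {M : DCPS ℕ ℕ} {k V I} {e : Edge} (h : Prom M k V I) (he : e ∈ I) :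
    ∃ V' w i I1 I2, V = V' + {(w, i)} ∧ I = I1 + I2 ∧ e ∈ I1 ∧
      LR M (some (k + 1 - i, none)) w I1 ∧ Prom M k V' I2 := by
  classical
  obtain ⟨P, rfl, rfl, hP⟩ := h
  obtain ⟨x, hx, hex⟩ := Multiset.mem_join.1 he
  obtain ⟨p, hp, rfl⟩ := Multiset.mem_map.1 hx
  refine ⟨(P.erase p).map Prod.fst, p.1.1, p.1.2, p.2, ((P.erase p).map Prod.snd).sum,
    ?_, ?_, hex, hP p hp, P.erase p, rfl, rfl, ?_⟩
  · conv_lhs => rw [← Multiset.cons_erase hp]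
    simp [Multiset.add_comm]
  · conv_lhs => rw [← Multiset.cons_erase hp]
    simp
  · intro p' hp'
    exact hP p' (Multiset.mem_of_mem_erase hp')

/-- Chains of states. -/
def Ch : ℕ → List Edge → ℕ → Prop
  | q, [], q' => q = q'
  | q, e :: J, q' => e.2.1 = q ∧ Ch e.2.2 J q'

def PathOK (m q : ℕ) (J : List Edge) (q' : ℕ) : Prop :=
  Ch q J q' ∧ J.Pairwise (fun a b => b.1 ≤ a.1) ∧ ∀ e ∈ J, e.1 < m

theorem PathOK.cons {j q q' qf J} (h : PathOK (j + 1) q' J qf) :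
    PathOK (j + 1) q ((j, q, q') :: J) qf := by
  obtain ⟨h1, h2, h3⟩ := h
  refine ⟨⟨rfl, h1⟩, List.pairwise_cons.2 ⟨?_, h2⟩, ?_⟩
  · intro e he; have := h3 e he; simp only; omega
  · intro e he
    rcases List.mem_cons.1 he with rfl | he
    · simp
    · exact h3 e he

theorem PathOK.mono {m m' q J qf} (h : PathOK m q J qf) (hm : m ≤ m') : PathOK m' q J qf :=
  ⟨h.1, h.2.1, fun e he => lt_of_lt_of_le (h.2.2 e he) hm⟩

theorem toMS_add (V : (List ℕ × ℕ) →₀ ℕ) (t : List ℕ × ℕ) :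
    Finsupp.toMultiset (V + Finsupp.single t 1) = Finsupp.toMultiset V + {t} := by
  simp [Finsupp.toMultiset_single]

/-- From runs to promises. -/
theorem SR.prom {M : DCPS ℕ ℕ} {k l m c qf} (h : SR M l m c qf) : l + m = k + 1 →
    (c.active = none → ∃ J : List Edge, PathOK m c.state J qf ∧
      Prom M k (Finsupp.toMultiset c.idle) (J : Multiset Edge)) ∧
    (∀ w i, c.active = some (w, i) → ∃ (j q' : ℕ) (J : List Edge) (I' I2 : Multiset Edge),
      i + j = k ∧ j < m ∧ PathOK (j + 1) q' J qf ∧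
      (∀ s, LR M (some (j, some (s, c.state))) w ((j, s, q') ::ₘ I')) ∧
      Prom M k (Finsupp.toMultiset c.idle) I2 ∧ I' + I2 = (J : Multiset Edge)) := by
  induction h with
  | @done l c h =>
    intro _
    refine ⟨fun _ => ⟨[], ⟨rfl, by simp, by simp⟩, Prom.zero _ _ _⟩, ?_⟩
    intro w i h'; rw [h] at h'; cases h'
  | @next l m c q _ ih =>
    intro hlm
    obtain ⟨ih1, ih2⟩ := ih (by omega)
    refine ⟨fun h => ?_, fun w i h => ?_⟩
    · obtain ⟨J, hJ, hP⟩ := ih1 h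
      exact ⟨J, hJ.mono (by omega), hP⟩
    · obtain ⟨j, q', J, I', I2, h1, h2, h3⟩ := ih2 w i h
      exact ⟨j, q', J, I', I2, h1, by omega, h3⟩
  | @step l m c c' r q hs _ ih =>
    intro hlm
    obtain ⟨ih1, ih2⟩ := ih hlm
    obtain ⟨hs, hact⟩ := hs
    cases hs with
    | @cr q γ q' u α w i V hr =>
      have hi : i = l := by
        rcases hact with ⟨_, _, h, h'⟩ | ⟨_, _, h, h'⟩ <;> simp at h h' <;> omega
      subst hi
      refine ⟨fun h => by simp at h, fun w' i' h => ?_⟩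
      simp only [Option.some.injEq, Prod.mk.injEq] at h
      obtain ⟨rfl, rfl⟩ := h
      obtain ⟨j, q1, J, I', I2, h1, h2, h3, h4, h5, h6⟩ := ih2 _ _ rfl
      cases α with
      | none =>
        refine ⟨j, q1, J, I', I2, h1, h2, h3, fun s => LR.cr hr (h4 s), ?_, h6⟩
        simpa [spawnOf] using h5
      | some a =>
        simp only [spawnOf, toMS_add] at h5
        obtain ⟨I3, I4, rfl, h7, h8⟩ := h5.uncons
        refine ⟨j, q1, J, I3 + I', I4, h1, h2, h3, fun s => ?_, h8, ?_⟩
        · rw [show k + 1 - (i + 1) = j by omega] at h7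
          have := LR.crs hr h7 (h4 s)
          rwa [Multiset.add_cons] at this
        · rw [← h6]; abel
    | @intr q γ q' u w i V hr =>
      have hi : i = l := by
        rcases hact with ⟨_, _, h, h'⟩ | ⟨_, _, h, h'⟩ <;> simp at h h' <;> omega
      subst hi
      refine ⟨fun h => by simp at h, fun w' i' h => ?_⟩
      simp only [Option.some.injEq, Prod.mk.injEq] at h
      obtain ⟨rfl, rfl⟩ := h
      obtain ⟨J, hJ, hP⟩ := ih1 rfl
      simp only [toMS_add] at hP
      obtain ⟨I3, I4, h6, h7, h8⟩ := hP.uncons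
      refine ⟨m, q', J, I3, I4, by omega, by omega, hJ, fun s => ?_, h8, h6.symm⟩
      rw [show k + 1 - (i + 1) = m by omega] at h7
      exact LR.intr hr h7
    | @res q γ q' w i V hr =>
      have hi : i = l := by
        rcases hact with ⟨_, _, h, h'⟩ | ⟨_, _, h, h'⟩ <;> simp at h h' <;> omega
      subst hi
      refine ⟨fun _ => ?_, fun w' i' h => by simp at h⟩
      obtain ⟨j, q1, J, I', I2, h1, h2, h3, h4, h5, h6⟩ := ih2 _ _ rfl
      have hj : j = m := by omega
      subst hj
      refine ⟨(j, q, q1) :: J, h3.cons, ?_⟩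
      simp only [toMS_add]
      have h7 := LR.res hr (h4 q)
      rw [show j + 1 = k + 1 - i by omega] at h7
      have := Prom.cons h7 h5
      rw [Multiset.cons_add, h6] at this
      exact this

/-- From promises to runs: the active part. -/
theorem LR.act {M : DCPS ℕ ℕ} {c w I} (h : LR M c w I) : ∀ j s q1, c = some (j, some (s, q1)) →
    ∃ q' I', I = (j, s, q') ::ₘ I' ∧ (∀ e ∈ I', e.1 < j) ∧
      ∀ V k l qf I2, l + j = k → Prom M k (Finsupp.toMultiset V) I2 →
      (∀ V2, Prom M k (Finsupp.toMultiset V2) (I' + I2) → SR M l (j + 1) ⟨q', none, V2⟩ qf) →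
      SR M l (j + 1) ⟨q1, some (w, l), V⟩ qf := by
  induction h with
  | dead w => intro j s q1 h; cases h
  | halt => intro j s q1 h; simp at h
  | res => intro j s q1 h; simp at h
  | @cr j s q γ q' u w I hr _ ih =>
    intro j' s' q1 h
    simp only [Option.some.injEq, Prod.mk.injEq] at h
    obtain ⟨rfl, rfl, rfl⟩ := h
    obtain ⟨q2, I', rfl, h2, h3⟩ := ih _ _ _ rfl
    refine ⟨q2, I', rfl, h2, ?_⟩
    intro V k l qf I2 hl hP hS
    refine SR.step ⟨Step.cr hr, Or.inl ⟨_, _, rfl, rfl⟩⟩ ?_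
    simp only [spawnOf, add_zero]
    exact h3 V k l qf I2 hl hP hS
  | @crs j s q γ q' u a w I1 I2 hr hL _ _ ih =>
    intro j' s' q1 h
    simp only [Option.some.injEq, Prod.mk.injEq] at h
    obtain ⟨rfl, rfl, rfl⟩ := h
    obtain ⟨q2, I', rfl, h2, h3⟩ := ih _ _ _ rfl
    refine ⟨q2, I1 + I', Multiset.add_cons _ _ _, ?_, ?_⟩
    · intro e he
      rcases Multiset.mem_add.1 he with he | he
      · exact hL.lvl e he
      · exact h2 e he
    intro V k l qf I2 hl hP hS
    refine SR.step ⟨Step.cr hr, Or.inl ⟨_, _, rfl, rfl⟩⟩ ?_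
    simp only [spawnOf]
    refine h3 _ k l qf (I1 + I2) hl ?_ ?_
    · rw [toMS_add]
      refine Prom.cons ?_ hP
      rwa [show k + 1 - (l + 1) = j by omega]
    · intro V2 hV2
      refine hS V2 ?_
      rwa [show I1 + I' + I2 = I' + (I1 + I2) by abel]
  | @intr j s q γ q' u w I hr hL _ =>
    intro j' s' q1 h
    simp only [Option.some.injEq, Prod.mk.injEq] at h
    obtain ⟨rfl, rfl, rfl⟩ := h
    refine ⟨q', I, rfl, hL.lvl, ?_⟩
    intro V k l qf I2 hl hP hS
    refine SR.step ⟨Step.intr hr, Or.inl ⟨_, _, rfl, rfl⟩⟩ ?_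
    refine hS _ ?_
    rw [toMS_add]
    refine Prom.cons ?_ hP
    rwa [show k + 1 - (l + 1) = j by omega]

theorem SR.idle {M : DCPS ℕ ℕ} {q V} : ∀ m l, SR M l m ⟨q, none, V⟩ q := by
  intro m
  induction m with
  | zero => intro l; exact SR.done (c := ⟨q, none, V⟩) rfl
  | succ m ih => intro l; exact SR.next (ih _)

theorem SR.of_prom {M : DCPS ℕ ℕ} {k qf} : ∀ (J : List Edge) (l m q : ℕ) V, l + m = k + 1 →
    PathOK m q J qf → Prom M k (Finsupp.toMultiset V) (J : Multiset Edge) →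
    SR M l m ⟨q, none, V⟩ qf := by
  intro J
  induction J with
  | nil =>
    intro l m q V _ hp _
    obtain rfl : q = qf := hp.1
    exact SR.idle _ _
  | cons e J ih =>
    intro l m q V hlm hp hP
    obtain ⟨⟨he, hch⟩, hpw, hlt⟩ := hp
    obtain ⟨j, s, q'⟩ := e
    simp only at he hch
    subst he
    have hjm : j < m := hlt _ List.mem_cons_self
    rw [List.pairwise_cons] at hpw
    obtain ⟨d, rfl⟩ : ∃ d, m = j + 1 + d := ⟨m - (j + 1), by omega⟩
    apply SR.nexts d
    obtain ⟨V', w, i, I1, I2, hV, hI, heI, hL, hP'⟩ := hP.find (e := (j, s, q')) (by simp)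
    have hle : ∀ e ∈ I1 + I2, e.1 ≤ j := by
      intro e he
      rw [← hI] at he
      rcases List.mem_cons.1 (Multiset.mem_coe.1 he) with rfl | he
      · exact le_rfl
      · exact hpw.1 _ he
    generalize hcc : (some (k + 1 - i, none) : Ctl) = cc at hL
    cases hL with
    | dead => cases hcc
    | halt => simp at heI
    | cr => simp at hcc
    | crs => simp at hcc
    | intr => simp at hcc
    | @res j0 s0 γ q1 w I1 hr hL =>
      simp only [Option.some.injEq, Prod.mk.injEq, and_true] at hcc
      obtain ⟨q2, I', rfl, h2, h3⟩ := hL.act _ _ _ rfl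
      have hj0 : j0 ≤ j := hle (j0, s0, q2) (by simp)
      have hjj : (j, s, q') = (j0, s0, q2) := by
        rcases Multiset.mem_cons.1 heI with h | h
        · exact h
        · have := h2 _ h; simp only at this; omega
      simp only [Prod.mk.injEq] at hjj
      obtain ⟨rfl, rfl, rfl⟩ := hjj
      have hi : i = l + d := by omega
      have hV2 : V = Multiset.toFinsupp V' + Finsupp.single (γ :: w, i) 1 := by
        have hc := congrArg Multiset.toFinsupp hV
        rwa [Finsupp.toMultiset_toFinsupp, map_add, Multiset.toFinsupp_singleton] at hc
      rw [hV2]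
      refine SR.step ⟨Step.res hr, Or.inr ⟨_, _, rfl, hi⟩⟩ ?_
      rw [hi]
      refine h3 _ k _ qf I2 (by omega) (by rwa [Multiset.toFinsupp_toMultiset]) ?_
      intro V2 hV2
      refine ih _ _ _ _ (by omega) ⟨hch, hpw.2, ?_⟩ ?_
      · intro e he; have := hpw.1 e he; simp only at this; omega
      · have : (J : Multiset Edge) = I' + I2 := by
          rw [Multiset.cons_add, ← Multiset.cons_coe, Multiset.cons_inj_right] at hI
          exact hI
        rwa [this]

theorem KStrat_iff_LR {M : DCPS ℕ ℕ} {k q} : KStratifiedReachable M k q ↔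
    ∃ J : List Edge, PathOK (k + 1) M.q0 J q ∧
      LR M (some (k + 1, none)) [M.γ0] (J : Multiset Edge) := by
  rw [KStrat_iff_SR]
  have h0 : Finsupp.toMultiset (initConfig M).idle = 0 + {([M.γ0], 0)} := by
    simp [initConfig, Finsupp.toMultiset_single]
  constructor
  · intro h
    obtain ⟨J, hJ, hP⟩ := (SR.prom (k := k) h (by omega)).1 rfl
    refine ⟨J, hJ, ?_⟩
    rw [h0] at hP
    obtain ⟨I1, I2, hI, hL, P, hP0, rfl, _⟩ := hP.uncons
    rw [Multiset.map_eq_zero] at hP0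
    subst hP0
    rw [hI]
    simpa using hL
  · rintro ⟨J, hJ, hL⟩
    refine SR.of_prom (k := k) J 0 (k + 1) M.q0 _ (by omega) hJ ?_
    have := Prom.cons (i := 0) (k := k) (by simpa using hL) (Prom.zero M k 0)
    change Prom M k (Finsupp.toMultiset (initConfig M).idle) _
    rw [h0]
    simpa using this

/-! ## Bounding -/

structure Bd (M : DCPS ℕ ℕ) (K : ℕ) : Prop where
  q0 : M.q0 < K
  γ0 : M.γ0 < K
  cr : ∀ {q γ q' u α}, Rule.cr q γ q' u α ∈ M.rules →
    q' < K ∧ u.length ≤ K ∧ (∀ a ∈ u, a < K) ∧ ∀ a, α = some a → a < K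
  intr : ∀ {q γ q' u}, Rule.intr q γ q' u ∈ M.rules →
    q' < K ∧ u.length ≤ K ∧ (∀ a ∈ u, a < K)
  res : ∀ {q γ q'}, Rule.res q γ q' ∈ M.rules → q < K ∧ q' < K

def sOK (K : ℕ) : Ctl → Prop
  | some (_, some (s, _)) => s < K
  | _ => True

theorem LR.bd {M : DCPS ℕ ℕ} {K c w I} (hB : Bd M K) (h : LR M c w I) : sOK K c →
    ∀ e ∈ I, e.2.1 < K ∧ e.2.2 < K := by
  induction h with
  | dead => simp
  | halt => simp
  | res hr _ ih => intro _; exact ih (hB.res hr).1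
  | cr hr _ ih => intro h; exact ih h
  | crs hr _ _ ih1 ih2 =>
    intro h e he
    rcases Multiset.mem_add.1 he with he | he
    · exact ih1 trivial e he
    · exact ih2 h e he
  | intr hr _ ih =>
    intro h e he
    rcases Multiset.mem_cons.1 he with rfl | he
    · exact ⟨h, (hB.intr hr).1⟩
    · exact ih trivial e he

theorem LR.drop {M : DCPS ℕ ℕ} {c w I} (h : LR M c w I) (j : ℕ) :
    (∀ s q, c ≠ some (j, some (s, q))) →
    ∃ C R : Multiset Edge, I = C + R ∧ (∀ e ∈ R, e.1 = j) ∧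
      (C.filter (fun e => e.1 = j)).card ≤ (C.filter (fun e => e.1 < j)).card ∧
      ∀ R' ≤ R, LR M c w (C + R') := by
  induction h with
  | dead w =>
    intro _
    refine ⟨0, 0, by simp, by simp, by simp, fun R' hR => ?_⟩
    obtain rfl : R' = 0 := by simpa using hR
    exact LR.dead _
  | halt j w =>
    intro _
    refine ⟨0, 0, by simp, by simp, by simp, fun R' hR => ?_⟩
    obtain rfl : R' = 0 := by simpa using hR
    exact LR.halt _ _
  | @res j0 q γ q' w I hr hL ih =>
    intro _
    by_cases hj : j0 = j
    · subst hj
      obtain ⟨q2, I', rfl, h⟩ := hL.lvl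
      by_cases hI : I' = 0
      · subst hI
        refine ⟨0, _, (zero_add _).symm, by simp, by simp, fun R' hR => ?_⟩
        rw [zero_add]
        rcases Multiset.le_singleton.1 hR with rfl | rfl
        · exact LR.halt _ _
        · exact LR.res hr hL
      · refine ⟨_, 0, (add_zero _).symm, by simp, ?_, fun R' hR => ?_⟩
        · have h1 : I'.filter (fun e => e.1 = j0) = 0 :=
            Multiset.filter_eq_nil.2 (fun e he => (h e he).ne)
          have h2 : I'.filter (fun e => e.1 < j0) = I' := Multiset.filter_eq_self.2 h
          rw [Multiset.filter_cons_of_pos _ (by rfl), Multiset.filter_cons_of_neg _ (by simp),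
            h1, h2]
          have h5 := Nat.pos_of_ne_zero (fun h0 => hI (Multiset.card_eq_zero.1 h0))
          simp
          omega
        · obtain rfl : R' = 0 := by simpa using hR
          rw [add_zero]
          exact LR.res hr hL
    · obtain ⟨C, R, h1, h2, h3, h4⟩ := ih (by intro s q h; simp at h; exact hj h.1)
      exact ⟨C, R, h1, h2, h3, fun R' hR => LR.res hr (h4 R' hR)⟩
  | @cr j0 s q γ q' u w I hr hL ih =>
    intro hc
    have hj : j0 ≠ j := by rintro rfl; exact hc _ _ rfl
    obtain ⟨C, R, h1, h2, h3, h4⟩ := ih (by intro s q h; simp at h; exact hj h.1)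
    exact ⟨C, R, h1, h2, h3, fun R' hR => LR.cr hr (h4 R' hR)⟩
  | @crs j0 s q γ q' u a w I1 I2 hr hL1 hL2 ih1 ih2 =>
    intro hc
    have hj : j0 ≠ j := by rintro rfl; exact hc _ _ rfl
    obtain ⟨C, R, rfl, h2, h3, h4⟩ := ih2 (by intro s q h; simp at h; exact hj h.1)
    obtain ⟨C', R1, rfl, h2', h3', h4'⟩ := ih1 (by simp)
    refine ⟨C' + C, R1 + R, by abel, ?_, ?_, fun R' hR => ?_⟩
    · intro e he
      rcases Multiset.mem_add.1 he with he | he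
      · exact h2' e he
      · exact h2 e he
    · simp only [Multiset.filter_add, Multiset.card_add]; omega
    · have := LR.crs hr (h4' (R' ∩ R1) Multiset.inter_le_right)
        (h4 (R' - R1) (tsub_le_iff_left.2 hR))
      have e : C' + R' ∩ R1 + (C + (R' - R1)) = C' + C + R' := by
        conv_rhs => rw [← Multiset.sub_add_inter R' R1]
        generalize R' - R1 = x
        generalize R' ∩ R1 = y
        abel
      rwa [e] at this
  | @intr j0 s q γ q' u w I hr hL ih =>
    intro hc
    have hj : j0 ≠ j := by rintro rfl; exact hc _ _ rfl
    obtain ⟨C, R, rfl, h2, h3, h4⟩ := ih (by simp)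
    refine ⟨(j0, s, q') ::ₘ C, R, by simp, h2, ?_, fun R' hR => ?_⟩
    · rw [Multiset.filter_cons_of_neg _ (by simpa using hj)]
      refine h3.trans (Multiset.card_le_card (Multiset.filter_le_filter _ (Multiset.le_cons_self _ _)))
    · rw [Multiset.cons_add]
      exact LR.intr hr (h4 R' hR)

def en (q : ℕ) (J : List Edge) : ℕ := J.foldl (fun _ e => e.2.2) q

theorem Ch_append {q' : ℕ} : ∀ (A B : List Edge) (q : ℕ),
    Ch q (A ++ B) q' ↔ Ch q A (en q A) ∧ Ch (en q A) B q' := by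
  intro A
  induction A with
  | nil => intro B q; simp [Ch, en]
  | cons e A ih => intro B q; simp [Ch, en, ih, and_assoc]

theorem en_append (q : ℕ) (A B : List Edge) : en q (A ++ B) = en (en q A) B := by
  simp [en]

theorem en_lt {K : ℕ} : ∀ (A : List Edge) (q : ℕ), q < K → (∀ e ∈ A, e.2.2 < K) → en q A < K := by
  intro A
  induction A with
  | nil => intro q h _; exact h
  | cons e A ih =>
    intro q _ h
    exact ih _ (h e (by simp)) (fun e' he' => h e' (by simp [he']))

/-- Pigeonhole: a long level segment has a removable loop. -/
theorem cut_loop {K n : ℕ} (B : List Edge) (q : ℕ) (C : Multiset Edge) (hC : C ≤ (B : Multiset Edge))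
    (hn : C.card ≤ n) (hst : ∀ X, X <+: B → en q X < K) (hlen : K * (n + 1) ≤ B.length) :
    ∃ X Y Z, B = X ++ Y ++ Z ∧ Y ≠ [] ∧ en q X = en q (X ++ Y) ∧
      C ≤ ((X ++ Z : List Edge) : Multiset Edge) := by
  have hmaps : ∀ i ∈ Finset.range (B.length + 1),
      ((en q (B.take i), (C ∩ (B.take i : Multiset Edge)).card) : ℕ × ℕ) ∈
        Finset.range K ×ˢ Finset.range (n + 1) := by
    intro i _
    simp only [Finset.mem_product, Finset.mem_range]
    refine ⟨hst _ (List.take_prefix _ _), ?_⟩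
    have := Multiset.card_le_card (Multiset.inter_le_left (s := C) (t := (B.take i : Multiset Edge)))
    omega
  have hcard : (Finset.range K ×ˢ Finset.range (n + 1)).card < (Finset.range (B.length + 1)).card := by
    rw [Finset.card_product, Finset.card_range, Finset.card_range, Finset.card_range]; omega
  have key : ∃ i i', i < i' ∧ i' ≤ B.length ∧ en q (B.take i) = en q (B.take i') ∧
      (C ∩ (B.take i : Multiset Edge)).card = (C ∩ (B.take i' : Multiset Edge)).card := by
    obtain ⟨i, hi, i', hi', hne, heq⟩ := Finset.exists_ne_map_eq_of_card_lt_of_maps_to hcard hmaps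
    simp only [Prod.mk.injEq, Finset.mem_range] at heq hi hi'
    rcases lt_or_gt_of_ne hne with h | h
    · exact ⟨i, i', h, by omega, heq.1, heq.2⟩
    · exact ⟨i', i, h, by omega, heq.1.symm, heq.2.symm⟩
  obtain ⟨i, i', hlt, hle, h1, h2⟩ := key
  have ht : B.take i ++ (B.take i').drop i = B.take i' := by
    conv_rhs => rw [← List.take_append_drop i (B.take i')]
    rw [List.take_take, min_eq_left hlt.le]
  refine ⟨B.take i, (B.take i').drop i, B.drop i', ?_, ?_, ?_, ?_⟩
  · rw [ht, List.take_append_drop]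
  · intro h0
    have := congrArg List.length h0
    simp at this
    omega
  · rw [ht, h1]
  · have hsub : (B.take i : Multiset Edge) ≤ (B.take i' : Multiset Edge) := by
      rw [← ht, ← Multiset.coe_add]; exact Multiset.le_add_right _ _
    have hEq : C ∩ (B.take i : Multiset Edge) = C ∩ (B.take i' : Multiset Edge) :=
      Multiset.eq_of_le_of_card_le (inf_le_inf_left C hsub) h2.ge
    rw [← Multiset.coe_add, Multiset.le_iff_count]
    intro e
    rw [Multiset.count_add]
    have hc := congrArg (Multiset.count e) hEq
    simp only [Multiset.count_inter] at hc
    have hCe := (Multiset.le_iff_count.1 hC) e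
    have hBe : Multiset.count e (B : Multiset Edge) = Multiset.count e (B.take i' : Multiset Edge) +
        Multiset.count e (B.drop i' : Multiset Edge) := by
      rw [← Multiset.count_add, Multiset.coe_add, List.take_append_drop]
    have hs := (Multiset.le_iff_count.1 hsub) e
    omega

theorem split_lvl (j : ℕ) : ∀ J : List Edge, J.Pairwise (fun a b => b.1 ≤ a.1) →
    J = J.filter (fun e => j < e.1) ++ (J.filter (fun e => e.1 = j) ++ J.filter (fun e => e.1 < j)) := by
  intro J
  induction J with
  | nil => simp
  | cons e J ih =>
    intro h
    rw [List.pairwise_cons] at h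
    have ih := ih h.2
    rcases lt_trichotomy j e.1 with he | he | he
    · rw [List.filter_cons_of_pos (by simpa using he), List.filter_cons_of_neg (by simp; omega),
        List.filter_cons_of_neg (by simp; omega), List.cons_append, ← ih]
    · have h0 : J.filter (fun e => j < e.1) = [] := by
        rw [List.filter_eq_nil_iff]; intro a ha; have := h.1 a ha; simp; omega
      rw [List.filter_cons_of_neg (by simp; omega), List.filter_cons_of_pos (by simpa using he.symm),
        List.filter_cons_of_neg (by simp; omega), h0]
      rw [h0] at ih
      simpa using ih
    · have h0 : J.filter (fun e => j < e.1) = [] := by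
        rw [List.filter_eq_nil_iff]; intro a ha; have := h.1 a ha; simp; omega
      have h1 : J.filter (fun e => e.1 = j) = [] := by
        rw [List.filter_eq_nil_iff]; intro a ha; have := h.1 a ha; simp; omega
      rw [List.filter_cons_of_neg (by simp; omega), List.filter_cons_of_neg (by simp; omega),
        List.filter_cons_of_pos (by simpa using he), h0, h1]
      rw [h0, h1] at ih
      simpa using ih

def bnd (K : ℕ) : ℕ → ℕ
  | 0 => 0
  | j + 1 => bnd K j + K * (bnd K j + 1)

theorem bounded {M : DCPS ℕ ℕ} {K k q : ℕ} (hB : Bd M K)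
    (h : ∃ J : List Edge, PathOK (k + 1) M.q0 J q ∧
      LR M (some (k + 1, none)) [M.γ0] (J : Multiset Edge)) :
    ∃ J : List Edge, PathOK (k + 1) M.q0 J q ∧
      LR M (some (k + 1, none)) [M.γ0] (J : Multiset Edge) ∧ J.length ≤ bnd K (k + 1) := by
  classical
  have h' : ∃ n, ∃ J : List Edge, PathOK (k + 1) M.q0 J q ∧
      LR M (some (k + 1, none)) [M.γ0] (J : Multiset Edge) ∧ J.length = n := by
    obtain ⟨J, h1, h2⟩ := h; exact ⟨_, J, h1, h2, rfl⟩
  obtain ⟨J, hP, hL, hlen⟩ := Nat.find_spec h'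
  have hmin : ∀ J' : List Edge, PathOK (k + 1) M.q0 J' q →
      LR M (some (k + 1, none)) [M.γ0] (J' : Multiset Edge) → J.length ≤ J'.length := by
    intro J' h1 h2
    rw [hlen]
    exact Nat.find_min' h' ⟨J', h1, h2, rfl⟩
  refine ⟨J, hP, hL, ?_⟩
  have hst := hL.bd hB trivial
  have main : ∀ j, (J.filter (fun e => e.1 < j)).length ≤ bnd K j := by
    intro j
    induction j with
    | zero => simp [bnd]
    | succ j ih =>
      obtain ⟨C, R, hI, hR, hcard, hdrop⟩ := hL.drop j (by simp)
      have hsp := split_lvl j J hP.2.1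
      set A := J.filter (fun e => j < e.1) with hA
      set B := J.filter (fun e => e.1 = j) with hBdef
      set T := J.filter (fun e => e.1 < j) with hT
      have hlenS : (J.filter (fun e => e.1 < j + 1)).length = B.length + T.length := by
        rw [hsp, List.filter_append, List.filter_append]
        have a1 : A.filter (fun e => e.1 < j + 1) = [] := by
          rw [List.filter_eq_nil_iff]; intro a ha
          have := (List.mem_filter.1 ha).2; simp at this ⊢; omega
        have a2 : B.filter (fun e => e.1 < j + 1) = B := by
          rw [List.filter_eq_self]; intro a ha
          have := (List.mem_filter.1 ha).2; simp at this ⊢; omega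
        have a3 : T.filter (fun e => e.1 < j + 1) = T := by
          rw [List.filter_eq_self]; intro a ha
          have := (List.mem_filter.1 ha).2; simp at this ⊢; omega
        rw [a1, a2, a3]; simp
      have hBm : (B : Multiset Edge) = C.filter (fun e => e.1 = j) + R := by
        have := congrArg (Multiset.filter (fun e : Edge => e.1 = j)) hI
        rw [Multiset.filter_coe, Multiset.filter_add, Multiset.filter_eq_self.2 hR] at this
        exact this
      have hTm : (T : Multiset Edge) = C.filter (fun e => e.1 < j) := by
        have := congrArg (Multiset.filter (fun e : Edge => e.1 < j)) hI
        have h0 : R.filter (fun e => e.1 < j) = 0 :=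
          Multiset.filter_eq_nil.2 (fun e he => by rw [hR e he]; simp)
        rw [Multiset.filter_coe, Multiset.filter_add, h0, add_zero] at this
        exact this
      have hTl : (C.filter (fun e => e.1 < j)).card = T.length := by
        rw [← hTm]; simp
      rw [hTl] at hcard
      by_contra hcon
      rw [hlenS] at hcon
      simp only [bnd] at hcon
      have hBlen : K * (bnd K j + 1) ≤ B.length := by omega
      have hsub : ∀ e ∈ J, e.2.2 < K := fun e he => (hst e (Multiset.mem_coe.2 he)).2
      obtain ⟨X, Y, Z, hXYZ, hY, hen, hCle⟩ := cut_loop (K := K) (n := bnd K j) B (en M.q0 A)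
        (C.filter (fun e => e.1 = j)) (by rw [hBm]; exact Multiset.le_add_right _ _)
        (hcard.trans ih)
        (by
          intro X hX
          rw [← en_append]
          apply en_lt _ _ hB.q0
          intro e he
          apply hsub
          rcases List.mem_append.1 he with he | he
          · exact (List.mem_filter.1 he).1
          · exact (List.mem_filter.1 (hX.subset he)).1) hBlen
      have hnew : LR M (some (k + 1, none)) [M.γ0]
          ((A ++ (X ++ Z ++ T) : List Edge) : Multiset Edge) := by
        have hR' : ((X ++ Z : List Edge) : Multiset Edge) - C.filter (fun e => e.1 = j) ≤ R := by
          rw [tsub_le_iff_left, ← hBm, hXYZ]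
          exact (List.Sublist.append (List.sublist_append_left _ _) (List.Sublist.refl _)).subperm
        have := hdrop _ hR'
        have e1 : C + (((X ++ Z : List Edge) : Multiset Edge) - C.filter (fun e => e.1 = j)) =
            ((A ++ (X ++ Z ++ T) : List Edge) : Multiset Edge) := by
          have e2 : C = (A : Multiset Edge) + C.filter (fun e => e.1 = j) + T := by
            have e3 : (C + R : Multiset Edge) = A + C.filter (fun e => e.1 = j) + T + R := by
              rw [← hI]
              conv_lhs => rw [hsp]
              rw [← Multiset.coe_add, ← Multiset.coe_add, hBm]
              abel
            exact add_right_cancel e3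
          have e4 := add_tsub_cancel_of_le hCle
          generalize C.filter (fun e => e.1 = j) = F at e2 e4 ⊢
          rw [e2]
          generalize ((X ++ Z : List Edge) : Multiset Edge) - F = y at e4 ⊢
          rw [← Multiset.coe_add, ← Multiset.coe_add, ← e4]
          abel
        rwa [e1] at this
      have hJs : J = A ++ (X ++ (Y ++ (Z ++ T))) := by
        conv_lhs => rw [hsp, hXYZ]
        simp
      have hsl : (A ++ (X ++ Z ++ T)).Sublist J := by
        conv_rhs => rw [hJs]
        rw [List.append_assoc X Z T]
        exact (((List.sublist_append_right Y (Z ++ T)).append_left X).append_left A)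
      have hpath : PathOK (k + 1) M.q0 (A ++ (X ++ Z ++ T)) q := by
        refine ⟨?_, hP.2.1.sublist hsl, fun e he => hP.2.2 e (hsl.subset he)⟩
        have hc := hP.1
        rw [hJs, Ch_append, Ch_append, Ch_append] at hc
        rw [List.append_assoc, Ch_append, Ch_append]
        refine ⟨hc.1, hc.2.1, ?_⟩
        have := hc.2.2.2
        rw [← en_append _ X Y, ← hen] at this
        exact this
      have hl1 := hmin _ hpath hnew
      have hl2 := congrArg List.length hJs
      have hl3 : 0 < Y.length := List.length_pos_iff.2 hY
      simp only [List.length_append] at hl1 hl2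
      omega
  have := main (k + 1)
  rwa [List.filter_eq_self.2 (fun e he => by simpa using hP.2.2 e he)] at this

/-! ## Finite derivations -/

inductive D (M : DCPS ℕ ℕ) : Ctl → List ℕ → List Edge → Ctl → Prop
  | refl (c) : D M c [] [] c
  | pop (γ) : D M none [γ] [] none
  | abort {j w I o} : D M none w I o → D M (some (j, none)) w I o
  | res {j q γ q' I o} : Rule.res q γ q' ∈ M.rules →
      D M (some (j, some (q, q'))) [γ] I o → D M (some (j + 1, none)) [γ] I o
  | cr {j s q γ q' u I o} : Rule.cr q γ q' u none ∈ M.rules →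
      D M (some (j, some (s, q'))) u I o → D M (some (j, some (s, q))) [γ] I o
  | crs {j s q γ q' u a I1 I2 I o} : Rule.cr q γ q' u (some a) ∈ M.rules →
      D M (some (j, none)) [a] I1 none →
      D M (some (j, some (s, q'))) u I2 o → I.Perm (I1 ++ I2) →
      D M (some (j, some (s, q))) [γ] I o
  | intr {j s q γ q' u I' I o} : Rule.intr q γ q' u ∈ M.rules →
      D M (some (j, none)) u I' o → I.Perm ((j, s, q') :: I') →
      D M (some (j, some (s, q))) [γ] I o
  | concat {c γ I1 c1 w I2 I o} : D M c [γ] I1 c1 → D M c1 w I2 o → I.Perm (I1 ++ I2) →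
      D M c (γ :: w) I o

theorem D.toLR {M : DCPS ℕ ℕ} {c w I o} (h : D M c w I o) : ∀ {w2 I2}, LR M o w2 I2 →
    LR M c (w ++ w2) ((I : Multiset Edge) + I2) := by
  induction h with
  | refl c => intro w2 I2 h; simpa using h
  | pop γ =>
    intro w2 I2 h
    have : I2 = 0 := h.lvl
    subst this
    simpa using LR.dead _
  | abort _ ih =>
    intro w2 I2 h
    have h1 := ih h
    have h2 : _ = (0 : Multiset Edge) := h1.lvl
    rw [h2]
    exact LR.halt _ _
  | res hr _ ih => intro w2 I2 h; exact LR.res hr (ih h)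
  | cr hr _ ih => intro w2 I2 h; exact LR.cr hr (ih h)
  | @crs j s q γ q' u a I1 I2 I o hr _ _ hp ih1 ih2 =>
    intro w2 I3 h
    have h1 := ih1 (LR.dead [])
    have h3 := LR.crs hr (by simpa using h1) (ih2 h)
    rw [Multiset.coe_eq_coe.2 hp, ← Multiset.coe_add, add_assoc]
    exact h3
  | intr hr _ hp ih =>
    intro w2 I3 h
    rw [Multiset.coe_eq_coe.2 hp, ← Multiset.cons_coe, Multiset.cons_add]
    exact LR.intr hr (ih h)
  | concat _ _ hp ih1 ih2 =>
    intro w2 I3 h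
    have h3 := ih1 (ih2 h)
    rw [Multiset.coe_eq_coe.2 hp, ← Multiset.coe_add, add_assoc]
    exact h3

theorem D.single {M : DCPS ℕ ℕ} {γ : ℕ} {u w : List ℕ} {c o I} (h : D M c [γ] I o)
    (he : [γ] = u ++ w) : ∃ c1 I1 I2, D M c u I1 c1 ∧ D M c1 w I2 o ∧ I.Perm (I1 ++ I2) := by
  cases u with
  | nil =>
    simp only [List.nil_append] at he
    exact ⟨c, [], I, D.refl c, he ▸ h, by simp⟩
  | cons a u =>
    simp only [List.cons_append, List.cons.injEq, List.nil_eq, List.append_eq_nil_iff] at he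
    obtain ⟨rfl, rfl, rfl⟩ := he
    exact ⟨o, I, [], h, D.refl o, by simp⟩

theorem D.split {M : DCPS ℕ ℕ} {c x I o} (h : D M c x I o) : ∀ {u w}, x = u ++ w →
    ∃ c1 I1 I2, D M c u I1 c1 ∧ D M c1 w I2 o ∧ I.Perm (I1 ++ I2) := by
  induction h with
  | refl c =>
    intro u w h
    obtain ⟨rfl, rfl⟩ := List.append_eq_nil_iff.1 h.symm
    exact ⟨c, [], [], D.refl _, D.refl _, by simp⟩
  | pop γ => intro u w h; exact (D.pop γ).single h
  | abort _ ih =>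
    intro u w h
    obtain ⟨c1, I1, I2, h1, h2, h3⟩ := ih h
    exact ⟨c1, I1, I2, h1.abort, h2, h3⟩
  | res hr h1 ih => intro u w h; exact (D.res hr h1).single h
  | cr hr h1 ih => intro u w h; exact (D.cr hr h1).single h
  | crs hr h1 h2 h3 => intro u w h; exact (D.crs hr h1 h2 h3).single h
  | intr hr h1 h2 => intro u w h; exact (D.intr hr h1 h2).single h
  | @concat c γ I1 c1 w' I2 I o h1 h2 hp ih1 ih2 =>
    intro u w h
    cases u with
    | nil =>
      simp only [List.nil_append] at h
      exact ⟨c, [], I, D.refl c, h ▸ D.concat h1 h2 hp, by simp⟩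
    | cons a u =>
      simp only [List.cons_append, List.cons.injEq] at h
      obtain ⟨rfl, h⟩ := h
      obtain ⟨c2, I3, I4, h3, h4, h5⟩ := ih2 h
      refine ⟨c2, I1 ++ I3, I4, D.concat h1 h3 (List.Perm.refl _), h4, ?_⟩
      rw [List.append_assoc]
      exact hp.trans (h5.append_left I1)

theorem D.dead {M : DCPS ℕ ℕ} : ∀ w, D M none w [] none := by
  intro w
  induction w with
  | nil => exact D.refl _
  | cons a w ih => exact D.concat (D.pop a) ih (by simp)

theorem LR.toD {M : DCPS ℕ ℕ} {c w N} (h : LR M c w N) : ∀ I : List Edge, (I : Multiset Edge) = N →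
    D M c w I none := by
  induction h with
  | dead w =>
    intro I hI
    obtain rfl : I = [] := by simpa using hI
    exact D.dead w
  | halt j w =>
    intro I hI
    obtain rfl : I = [] := by simpa using hI
    exact (D.dead w).abort
  | @res j q γ q' w N hr _ ih =>
    intro I hI
    obtain ⟨c1, I1, I2, h1, h2, h3⟩ := (ih I hI).split (u := [γ]) (w := w) rfl
    exact D.concat (D.res hr h1) h2 h3
  | cr hr _ ih =>
    intro I hI
    obtain ⟨c1, I1, I2, h1, h2, h3⟩ := (ih I hI).split rfl
    exact D.concat (D.cr hr h1) h2 h3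
  | @crs j s q γ q' u a w N1 N2 hr _ _ ih1 ih2 =>
    intro I hI
    obtain ⟨A, rfl⟩ := Quot.exists_rep N1
    obtain ⟨B, rfl⟩ := Quot.exists_rep N2
    have hp : I.Perm (A ++ B) := Multiset.coe_eq_coe.1 hI
    obtain ⟨c1, I1, I2, h1, h2, h3⟩ := (ih2 B rfl).split rfl
    refine D.concat (D.crs hr (ih1 A rfl) h1 (List.Perm.refl _)) h2 ?_
    rw [List.append_assoc]
    exact hp.trans (h3.append_left A)
  | @intr j s q γ q' u w N hr _ ih =>
    intro I hI
    obtain ⟨A, rfl⟩ := Quot.exists_rep N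
    have hp : I.Perm ((j, s, q') :: A) := Multiset.coe_eq_coe.1 hI
    obtain ⟨c1, I1, I2, h1, h2, h3⟩ := (ih A rfl).split rfl
    refine D.concat (D.intr hr h1 (List.Perm.refl _)) h2 ?_
    rw [List.cons_append]
    exact hp.trans (h3.cons _)

theorem D_iff_LR {M : DCPS ℕ ℕ} {c w} {I : List Edge} :
    LR M c w (I : Multiset Edge) ↔ D M c w I none :=
  ⟨fun h => h.toD I rfl, fun h => by simpa using h.toLR (LR.dead [])⟩

/-! ## The finite universe -/

def lup {α : Type*} (L : List α) : ℕ → List (List α)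
  | 0 => [[]]
  | n + 1 => [] :: (L.product (lup L n)).map (fun p => p.1 :: p.2)

theorem mem_lup {α : Type*} {L : List α} : ∀ {n : ℕ} {t : List α},
    t ∈ lup L n ↔ t.length ≤ n ∧ ∀ a ∈ t, a ∈ L := by
  intro n
  induction n with
  | zero =>
    intro t
    simp only [lup, List.mem_singleton, Nat.le_zero, List.length_eq_zero_iff]
    constructor
    · rintro rfl; simp
    · exact fun h => h.1
  | succ n ih =>
    intro t
    cases t with
    | nil => simp [lup]
    | cons a t =>
      simp only [lup, List.mem_cons, reduceCtorEq, List.mem_map, Prod.exists, List.pair_mem_product,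
        List.cons.injEq, false_or, ih, List.length_cons, Nat.add_le_add_iff_right, forall_eq_or_imp]
      constructor
      · rintro ⟨a', t', ⟨h1, h2, h3⟩, rfl, rfl⟩; exact ⟨h2, h1, h3⟩
      · rintro ⟨h1, h2, h3⟩; exact ⟨a, t, ⟨h2, h1, h3⟩, rfl, rfl⟩

abbrev Fact := Ctl × List ℕ × List Edge × Ctl

def Es (K : ℕ) : List Edge := (List.range K).product ((List.range K).product (List.range K))

def Cs (K : ℕ) : List Ctl :=
  none :: ((List.range K).map (fun j => (some (j, none) : Ctl)) ++
    (Es K).map (fun e => (some (e.1, some e.2) : Ctl)))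

def Us (K N : ℕ) : List Fact :=
  (Cs K).product ((lup (List.range K) K).product ((lup (Es K) N).product (Cs K)))

theorem mem_Es {K a b c : ℕ} : (a, b, c) ∈ Es K ↔ a < K ∧ b < K ∧ c < K := by
  simp [Es, List.pair_mem_product]

theorem Cs_none {K : ℕ} : none ∈ Cs K := by simp [Cs]
theorem Cs_idle {K j : ℕ} : some (j, none) ∈ Cs K ↔ j < K := by simp [Cs]
theorem Cs_act {K j s q : ℕ} : some (j, some (s, q)) ∈ Cs K ↔ j < K ∧ s < K ∧ q < K := by
  simp [Cs, mem_Es]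

theorem mem_Us {K N : ℕ} {c w I o} : (c, w, I, o) ∈ Us K N ↔
    c ∈ Cs K ∧ (w.length ≤ K ∧ ∀ a ∈ w, a < K) ∧ (I.length ≤ N ∧ ∀ e ∈ I, e ∈ Es K) ∧ o ∈ Cs K := by
  simp [Us, List.pair_mem_product, mem_lup]

theorem D.out {M : DCPS ℕ ℕ} {K0 K c w I o} (hB : Bd M K0) (hK : K0 ≤ K) (h : D M c w I o) :
    c ∈ Cs K → o ∈ Cs K := by
  induction h with
  | refl c => exact id
  | pop => exact id
  | abort _ ih => exact fun _ => ih Cs_none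
  | res hr _ ih =>
    intro h
    have := hB.res hr
    rw [Cs_idle] at h
    exact ih (Cs_act.2 ⟨by omega, by omega, by omega⟩)
  | cr hr _ ih =>
    intro h
    have := hB.cr hr
    rw [Cs_act] at h
    exact ih (Cs_act.2 ⟨by omega, by omega, by omega⟩)
  | crs hr _ _ _ _ ih =>
    intro h
    have := hB.cr hr
    rw [Cs_act] at h
    exact ih (Cs_act.2 ⟨by omega, by omega, by omega⟩)
  | intr hr _ _ ih =>
    intro h
    rw [Cs_act] at h
    exact ih (Cs_idle.2 (by omega))
  | concat _ _ _ ih1 ih2 => exact fun h => ih2 (ih1 h)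
/-! ## Closure relation -/

def cJ (c : Ctl) : ℕ := (c.getD (0, none)).1
def cA (c : Ctl) : ℕ × ℕ := (c.getD (0, none)).2.getD (0, 0)
def idl (j : ℕ) : Ctl := some (j, none)
def act (j : ℕ) (p : ℕ × ℕ) : Ctl := some (j, some p)
def cnt (l : List Edge) (e : Edge) : ℕ := (l.filter (fun b => b = e)).length

def Pm (I I' : List Edge) : Prop := ∀ e ∈ I ++ I', cnt I e = cnt I' e

theorem cnt_eq (l : List Edge) (e : Edge) : cnt l e = l.count e := by
  rw [cnt, List.count_eq_length_filter]
  congr 2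
  funext b
  exact (beq_eq_decide b e).symm

theorem Pm_iff {I I' : List Edge} : Pm I I' ↔ I.Perm I' := by
  rw [List.perm_iff_count]
  simp only [Pm, cnt_eq]
  constructor
  · intro h e
    by_cases he : e ∈ I ++ I'
    · exact h e he
    · rw [List.mem_append, not_or] at he
      rw [List.count_eq_zero_of_not_mem he.1, List.count_eq_zero_of_not_mem he.2]
  · intro h e _
    exact h e

/-- `f` follows from `f1`, `f2` by one rule. -/
def Rl (x : Inst) (f1 f2 f : Fact) : Prop :=
  f = (f.1, [], [], f.1) ∨
  f = (none, [f.2.1.headI], [], none) ∨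
  (f.1 = idl (cJ f.1) ∧ f1 = (none, f.2)) ∨
  (f.1 = idl (cJ f1.1 + 1) ∧ f1.1 = act (cJ f1.1) (cA f1.1) ∧ f1.2 = f.2 ∧
    f.2.1 = [f.2.1.headI] ∧
    (Sum.inr (Sum.inr ((cA f1.1).1, f.2.1.headI, (cA f1.1).2)) : RuleE) ∈ x.1) ∨
  (f1.1 = act (cJ f1.1) (cA f1.1) ∧ f.1 = act (cJ f1.1) ((cA f1.1).1, (cA f.1).2) ∧
    f.2 = ([f.2.1.headI], f1.2.2) ∧
    (Sum.inl (((cA f.1).2, f.2.1.headI), ((cA f1.1).2, f1.2.1), none) : RuleE) ∈ x.1) ∨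
  (f1.1 = act (cJ f1.1) (cA f1.1) ∧ f.1 = act (cJ f1.1) ((cA f1.1).1, (cA f.1).2) ∧
    f.2.1 = [f.2.1.headI] ∧ f.2.2.2 = f1.2.2.2 ∧
    f2 = (idl (cJ f1.1), [f2.2.1.headI], f2.2.2.1, none) ∧ Pm f.2.2.1 (f2.2.2.1 ++ f1.2.2.1) ∧
    (Sum.inl (((cA f.1).2, f.2.1.headI), ((cA f1.1).2, f1.2.1), some f2.2.1.headI) : RuleE) ∈ x.1) ∨
  (f1.1 = idl (cJ f1.1) ∧ f.1 = act (cJ f1.1) (cA f.1) ∧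
    f.2.1 = [f.2.1.headI] ∧ f.2.2.2 = f1.2.2.2 ∧ ∃ e ∈ f.2.2.1, e.1 = cJ f1.1 ∧ e.2.1 = (cA f.1).1 ∧
    Pm f.2.2.1 (e :: f1.2.2.1) ∧
    (Sum.inr (Sum.inl (((cA f.1).2, f.2.1.headI), (e.2.2, f1.2.1))) : RuleE) ∈ x.1) ∨
  (f1.2.1 = [f1.2.1.headI] ∧ f1.2.2.2 = f2.1 ∧ f.1 = f1.1 ∧ f.2.1 = f1.2.1.headI :: f2.2.1 ∧
    f.2.2.2 = f2.2.2.2 ∧ Pm f.2.2.1 (f1.2.2.1 ++ f2.2.2.1))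

theorem mem_cr {x : Inst} {q γ q' u α} :
    Rule.cr q γ q' u α ∈ (instDCPS x).rules ↔ (Sum.inl ((q, γ), (q', u), α) : RuleE) ∈ x.1 := by
  constructor
  · rintro ⟨e, he, h⟩
    rcases e with ⟨⟨a, b⟩, ⟨c, d⟩, e⟩ | ⟨⟨a, b⟩, ⟨c, d⟩⟩ | ⟨a, b, c⟩ <;> simp [decodeRule] at h
    obtain ⟨rfl, rfl, rfl, rfl, rfl⟩ := h
    exact he
  · intro h; exact ⟨_, h, rfl⟩

theorem mem_intr {x : Inst} {q γ q' u} :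
    Rule.intr q γ q' u ∈ (instDCPS x).rules ↔
      (Sum.inr (Sum.inl ((q, γ), (q', u))) : RuleE) ∈ x.1 := by
  constructor
  · rintro ⟨e, he, h⟩
    rcases e with ⟨⟨a, b⟩, ⟨c, d⟩, e⟩ | ⟨⟨a, b⟩, ⟨c, d⟩⟩ | ⟨a, b, c⟩ <;> simp [decodeRule] at h
    obtain ⟨rfl, rfl, rfl, rfl⟩ := h
    exact he
  · intro h; exact ⟨_, h, rfl⟩

theorem mem_res {x : Inst} {q γ q'} :
    Rule.res q γ q' ∈ (instDCPS x).rules ↔ (Sum.inr (Sum.inr (q, γ, q')) : RuleE) ∈ x.1 := by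
  constructor
  · rintro ⟨e, he, h⟩
    rcases e with ⟨⟨a, b⟩, ⟨c, d⟩, e⟩ | ⟨⟨a, b⟩, ⟨c, d⟩⟩ | ⟨a, b, c⟩ <;> simp [decodeRule] at h
    obtain ⟨rfl, rfl, rfl⟩ := h
    exact he
  · intro h; exact ⟨_, h, rfl⟩

def DF (x : Inst) (f : Fact) : Prop := D (instDCPS x) f.1 f.2.1 f.2.2.1 f.2.2.2

theorem Rl.toD {x : Inst} {f1 f2 f : Fact} (h1 : DF x f1) (h2 : DF x f2) (h : Rl x f1 f2 f) :
    DF x f := by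
  obtain ⟨c, w, I, o⟩ := f
  obtain ⟨c1, w1, I1, o1⟩ := f1
  obtain ⟨c2, w2, I2, o2⟩ := f2
  simp only [DF, Rl, Prod.mk.injEq, Pm_iff, ← mem_cr, ← mem_res, ← mem_intr] at *
  rcases h with ⟨-, rfl, rfl, rfl⟩ | ⟨rfl, hw, rfl, rfl⟩ | ⟨hc, rfl, rfl, rfl, rfl⟩ |
    ⟨hc, hc1, ⟨rfl, rfl, rfl⟩, hw, hr⟩ | ⟨hc1, hc, ⟨hw, rfl, rfl⟩, hr⟩ |
    ⟨hc1, hc, hw, rfl, ⟨hc2, hw2, -, rfl⟩, hp, hr⟩ | ⟨hc1, hc, hw, rfl, ⟨e, he, hj, hs, hp, hr⟩⟩ |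
    ⟨hw1, rfl, rfl, rfl, rfl, hp⟩
  · exact D.refl _
  · rw [hw]; exact D.pop _
  · rw [hc]; exact h1.abort
  · rw [hc, hw]
    rw [hc1, hw] at h1
    exact D.res hr h1
  · rw [hc, hw]
    rw [hc1] at h1
    exact D.cr hr h1
  · rw [hc, hw]
    rw [hc1] at h1
    rw [hc2, hw2] at h2
    exact D.crs hr h2 h1 hp
  · rw [hc, hw]
    rw [hc1] at h1
    obtain ⟨j, s, q'⟩ := e
    simp only at hj hs hr hp
    subst hj hs
    exact D.intr hr h1 hp
  · rw [hw1] at h1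
    exact D.concat h1 h2 hp

def f0 : Fact := (none, [], [], none)

def Closed (x : Inst) (U S : List Fact) : Prop :=
  ∀ g ∈ U, ∀ f1 ∈ f0 :: S, ∀ f2 ∈ f0 :: S, Rl x f1 f2 g → g ∈ S

theorem Closed.mem {x : Inst} {K0 K N : ℕ} {S : List Fact} (hB : Bd (instDCPS x) K0) (hK : K0 < K)
    (hS : Closed x (Us K N) S) {c w I o} (h : D (instDCPS x) c w I o) :
    c ∈ Cs K → (w.length ≤ K ∧ ∀ a ∈ w, a < K) → (I.length ≤ N ∧ ∀ e ∈ I, e ∈ Es K) →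
      (c, w, I, o) ∈ S := by
  have hf0 : f0 ∈ f0 :: S := List.mem_cons_self
  have one : ∀ {a : ℕ}, a < K → ([a].length ≤ K ∧ ∀ b ∈ [a], b < K) := by
    intro a ha
    simp only [List.length_singleton, List.mem_singleton, forall_eq]
    omega
  induction h with
  | refl c =>
    intro h1 h2 h3
    exact hS _ (mem_Us.2 ⟨h1, h2, h3, h1⟩) f0 hf0 f0 hf0 (Or.inl rfl)
  | pop γ =>
    intro h1 h2 h3
    exact hS _ (mem_Us.2 ⟨h1, h2, h3, h1⟩) f0 hf0 f0 hf0 (Or.inr (Or.inl rfl))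
  | abort h ih =>
    intro h1 h2 h3
    refine hS _ (mem_Us.2 ⟨h1, h2, h3, h.abort.out hB hK.le h1⟩) _
      (List.mem_cons_of_mem _ (ih Cs_none h2 h3)) f0 hf0 ?_
    exact Or.inr (Or.inr (Or.inl ⟨rfl, rfl⟩))
  | res hr h ih =>
    intro h1 h2 h3
    have hb := hB.res hr
    refine hS _ (mem_Us.2 ⟨h1, h2, h3, (D.res hr h).out hB hK.le h1⟩) _
      (List.mem_cons_of_mem _ (ih ?_ h2 h3)) f0 hf0 ?_
    · rw [Cs_idle] at h1
      exact Cs_act.2 ⟨by omega, by omega, by omega⟩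
    · exact Or.inr (Or.inr (Or.inr (Or.inl ⟨rfl, rfl, rfl, rfl, mem_res.1 hr⟩)))
  | cr hr h ih =>
    intro h1 h2 h3
    have hb := hB.cr hr
    refine hS _ (mem_Us.2 ⟨h1, h2, h3, (D.cr hr h).out hB hK.le h1⟩) _
      (List.mem_cons_of_mem _ (ih ?_ ⟨by omega, fun a ha => (hb.2.2.1 a ha).trans hK⟩ h3)) f0 hf0 ?_
    · rw [Cs_act] at h1
      exact Cs_act.2 ⟨by omega, by omega, by omega⟩
    · exact Or.inr (Or.inr (Or.inr (Or.inr (Or.inl ⟨rfl, rfl, rfl, mem_cr.1 hr⟩))))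
  | @crs j s q γ q' u a I1 I2 I o hr h h' hp ih1 ih2 =>
    intro h1 h2 h3
    have hb := hB.cr hr
    have hl := hp.length_eq
    rw [List.length_append] at hl
    have h4 := Cs_act.1 h1
    refine hS _ (mem_Us.2 ⟨h1, h2, h3, (D.crs hr h h' hp).out hB hK.le h1⟩) _
      (List.mem_cons_of_mem _ (ih2 ?_ ⟨by omega, fun a ha => (hb.2.2.1 a ha).trans hK⟩
        ⟨by omega, fun e he => h3.2 e (hp.mem_iff.2 (List.mem_append_right _ he))⟩)) _
      (List.mem_cons_of_mem _ (ih1 (Cs_idle.2 h4.1) (one ((hb.2.2.2 a rfl).trans hK))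
        ⟨by omega, fun e he => h3.2 e (hp.mem_iff.2 (List.mem_append_left _ he))⟩)) ?_
    · exact Cs_act.2 ⟨by omega, by omega, by omega⟩
    · exact Or.inr (Or.inr (Or.inr (Or.inr (Or.inr (Or.inl
        ⟨rfl, rfl, rfl, rfl, rfl, Pm_iff.2 hp, mem_cr.1 hr⟩)))))
  | @intr j s q γ q' u I' I o hr h hp ih =>
    intro h1 h2 h3
    have hb := hB.intr hr
    have hl := hp.length_eq
    rw [List.length_cons] at hl
    have h4 := Cs_act.1 h1
    refine hS _ (mem_Us.2 ⟨h1, h2, h3, (D.intr hr h hp).out hB hK.le h1⟩) _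
      (List.mem_cons_of_mem _ (ih (Cs_idle.2 h4.1)
        ⟨by omega, fun a ha => (hb.2.2 a ha).trans hK⟩
        ⟨by omega, fun e he => h3.2 e (hp.mem_iff.2 (List.mem_cons_of_mem _ he))⟩)) f0 hf0 ?_
    exact Or.inr (Or.inr (Or.inr (Or.inr (Or.inr (Or.inr (Or.inl
        ⟨rfl, rfl, rfl, rfl, (j, s, q'), hp.mem_iff.2 List.mem_cons_self, rfl, rfl,
          Pm_iff.2 hp, mem_intr.1 hr⟩))))))
  | @concat c γ I1 c1 w I2 I o h h' hp ih1 ih2 =>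
    intro h1 h2 h3
    have hl := hp.length_eq
    rw [List.length_append] at hl
    have hw := h2.1
    rw [List.length_cons] at hw
    refine hS _ (mem_Us.2 ⟨h1, h2, h3, (D.concat h h' hp).out hB hK.le h1⟩) _
      (List.mem_cons_of_mem _ (ih1 h1 (one (h2.2 γ List.mem_cons_self))
        ⟨by omega, fun e he => h3.2 e (hp.mem_iff.2 (List.mem_append_left _ he))⟩)) _
      (List.mem_cons_of_mem _ (ih2 (h.out hB hK.le h1)
        ⟨by omega, fun a ha => h2.2 a (List.mem_cons_of_mem _ ha)⟩
        ⟨by omega, fun e he => h3.2 e (hp.mem_iff.2 (List.mem_append_right _ he))⟩)) ?_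
    exact Or.inr (Or.inr (Or.inr (Or.inr (Or.inr (Or.inr (Or.inr
        ⟨rfl, rfl, rfl, rfl, rfl, Pm_iff.2 hp⟩))))))

theorem D_iff_closed {x : Inst} {K0 K N : ℕ} (hB : Bd (instDCPS x) K0) (hK : K0 < K) {f : Fact}
    (hf : f ∈ Us K N) :
    DF x f ↔ ∀ S ∈ lup (Us K N) (Us K N).length, Closed x (Us K N) S → f ∈ S := by
  classical
  constructor
  · intro h S _ hS
    obtain ⟨c, w, I, o⟩ := f
    have := mem_Us.1 hf
    exact hS.mem hB hK h this.1 this.2.1 this.2.2.1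
  · intro h
    have := h ((Us K N).filter (fun f => DF x f))
      (mem_lup.2 ⟨List.length_filter_le _ _, fun a ha => (List.mem_filter.1 ha).1⟩) ?_
    · simpa using (List.mem_filter.1 this).2
    · intro g hg f1 hf1 f2 hf2 hr
      have aux : ∀ f' ∈ f0 :: (Us K N).filter (fun f => DF x f), DF x f' := by
        intro f' hf'
        rcases List.mem_cons.1 hf' with rfl | hf'
        · exact D.refl _
        · simpa using (List.mem_filter.1 hf').2
      exact List.mem_filter.2 ⟨hg, by simpa using hr.toD (aux _ hf1) (aux _ hf2)⟩

/-! ## Path check -/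

def pstep (p : Option (ℕ × ℕ)) (e : Edge) : Option (ℕ × ℕ) :=
  if e.1 ≤ (p.getD (0, 0)).1 ∧ p = some ((p.getD (0, 0)).1, e.2.1) then some (e.1, e.2.2) else none

theorem foldl_none (J : List Edge) : J.foldl pstep none = none := by
  induction J with
  | nil => rfl
  | cons e J ih => rw [List.foldl_cons]; simpa [pstep] using ih

theorem path_fold : ∀ (J : List Edge) (b q q' : ℕ),
    (∃ b', J.foldl pstep (some (b, q)) = some (b', q')) ↔ PathOK (b + 1) q J q' := by
  intro J
  induction J with
  | nil => intro b q q'; simp [PathOK, Ch]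
  | cons e J ih =>
    intro b q q'
    rw [List.foldl_cons]
    by_cases h : e.1 ≤ b ∧ e.2.1 = q
    · have : pstep (some (b, q)) e = some (e.1, e.2.2) := by simp [pstep, h.1, h.2]
      rw [this, ih]
      simp only [PathOK, Ch, List.pairwise_cons, List.mem_cons, forall_eq_or_imp]
      constructor
      · rintro ⟨h1, h2, h3⟩
        exact ⟨⟨h.2, h1⟩, ⟨fun a ha => Nat.lt_succ_iff.1 (h3 a ha), h2⟩, by omega,
          fun a ha => by have := h3 a ha; omega⟩
      · rintro ⟨⟨h1, h2⟩, ⟨h3, h4⟩, h5, h6⟩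
        exact ⟨h2, h4, fun a ha => Nat.lt_succ_iff.2 (h3 a ha)⟩
    · have : pstep (some (b, q)) e = none := by
        simp only [pstep, Option.getD_some]
        rw [if_neg]
        simp only [Option.some.injEq, Prod.mk.injEq, true_and]
        tauto
      rw [this, foldl_none]
      constructor
      · rintro ⟨_, h⟩; cases h
      · rintro ⟨h1, h2, h3⟩
        exfalso
        exact h ⟨Nat.lt_succ_iff.1 (h3 e List.mem_cons_self), h1.1⟩
/-! ## Primitive recursiveness -/

section prim
variable {α β γ δ : Type*} [Primcodable α] [Primcodable β] [Primcodable γ] [Primcodable δ]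

theorem pr_bex {l : α → List β} {P : α → β → Prop} (hl : Primrec l)
    (hp : PrimrecPred (fun p : α × β => P p.1 p.2)) : PrimrecPred (fun a => ∃ b ∈ l a, P a b) := by
  have h : PrimrecRel (fun (b : β) (a : α) => P a b) :=
    (hp.comp (Primrec.pair Primrec.snd Primrec.fst) : PrimrecPred (fun p : β × α => P p.2 p.1)).primrecRel
  exact h.exists_mem_list.comp hl Primrec.id

theorem pr_ball {l : α → List β} {P : α → β → Prop} (hl : Primrec l)
    (hp : PrimrecPred (fun p : α × β => P p.1 p.2)) : PrimrecPred (fun a => ∀ b ∈ l a, P a b) := by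
  have h : PrimrecRel (fun (b : β) (a : α) => P a b) :=
    (hp.comp (Primrec.pair Primrec.snd Primrec.fst) : PrimrecPred (fun p : β × α => P p.2 p.1)).primrecRel
  exact h.forall_mem_list.comp hl Primrec.id

theorem pr_eq {f g : α → β} (hf : Primrec f) (hg : Primrec g) : PrimrecPred (fun a => f a = g a) := by
  classical
  exact Primrec.eq.comp hf hg

theorem pr_mem {f : α → β} {l : α → List β} (hf : Primrec f) (hl : Primrec l) :
    PrimrecPred (fun a => f a ∈ l a) := by
  refine (pr_bex (P := fun a b => f a = b) hl (pr_eq (hf.comp Primrec.fst) Primrec.snd)).of_eq ?_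
  intro a
  simp

theorem pr_imp {p q : α → Prop} (hp : PrimrecPred p) (hq : PrimrecPred q) :
    PrimrecPred (fun a => p a → q a) :=
  (hp.not.or hq).of_eq (fun _ => imp_iff_not_or.symm)

theorem pr_product {f : α → List β} {g : α → List γ} (hf : Primrec f) (hg : Primrec g) :
    Primrec (fun a => (f a).product (g a)) := by
  have h : Primrec₂ (fun (a : α) (b : β) => (g a).map (fun c => (b, c))) :=
    Primrec.list_map (hg.comp Primrec.fst)
      (Primrec.pair (Primrec.snd.comp Primrec.fst) Primrec.snd : Primrec _).to₂
  exact Primrec.list_flatMap hf h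

theorem pr_lup {L : α → List β} {n : α → ℕ} (hL : Primrec L) (hn : Primrec n) :
    Primrec (fun a => lup (L a) (n a)) := by
  have h : Primrec₂ (fun (a : α) (p : ℕ × List (List β)) =>
      ([] : List β) :: ((L a).product p.2).map (fun p => p.1 :: p.2)) := by
    refine Primrec.list_cons.comp (Primrec.const []) ?_
    refine Primrec.list_map (pr_product (hL.comp Primrec.fst) (Primrec.snd.comp Primrec.snd)) ?_
    exact (Primrec.list_cons.comp (Primrec.fst.comp Primrec.snd) (Primrec.snd.comp Primrec.snd))
  have h2 := Primrec.nat_rec' hn (Primrec.const [([] : List β)]) h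
  refine h2.of_eq ?_
  intro a
  induction n a with
  | zero => rfl
  | succ m ih => simp only [lup, ← ih]

theorem pr_Es {n : α → ℕ} (hn : Primrec n) : Primrec (fun a => Es (n a)) :=
  have h := Primrec.list_range.comp hn
  pr_product h (pr_product h h)

theorem pr_idl {f : α → ℕ} (hf : Primrec f) : Primrec (fun a => idl (f a)) :=
  Primrec.option_some.comp (Primrec.pair hf (Primrec.const none))

theorem pr_act {f : α → ℕ} {g : α → ℕ × ℕ} (hf : Primrec f) (hg : Primrec g) :
    Primrec (fun a => act (f a) (g a)) :=
  Primrec.option_some.comp (Primrec.pair hf (Primrec.option_some.comp hg))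

theorem pr_Cs {n : α → ℕ} (hn : Primrec n) : Primrec (fun a => Cs (n a)) := by
  refine Primrec.list_cons.comp (Primrec.const none) (Primrec.list_append.comp ?_ ?_)
  · exact Primrec.list_map (Primrec.list_range.comp hn) (pr_idl Primrec.snd)
  · exact Primrec.list_map (pr_Es hn)
      (pr_act (Primrec.fst.comp Primrec.snd) (Primrec.snd.comp Primrec.snd))

theorem pr_Us {n m : α → ℕ} (hn : Primrec n) (hm : Primrec m) : Primrec (fun a => Us (n a) (m a)) :=
  pr_product (pr_Cs hn) (pr_product (pr_lup (Primrec.list_range.comp hn) hn)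
    (pr_product (pr_lup (pr_Es hn) hm) (pr_Cs hn)))

theorem pr_cJ {f : α → Ctl} (hf : Primrec f) : Primrec (fun a => cJ (f a)) :=
  Primrec.fst.comp (Primrec.option_getD.comp hf (Primrec.const (0, none)))

theorem pr_cA {f : α → Ctl} (hf : Primrec f) : Primrec (fun a => cA (f a)) :=
  Primrec.option_getD.comp (Primrec.snd.comp (Primrec.option_getD.comp hf (Primrec.const (0, none))))
    (Primrec.const (0, 0))

theorem pr_cnt {f : α → List Edge} {g : α → Edge} (hf : Primrec f) (hg : Primrec g) :
    Primrec (fun a => cnt (f a) (g a)) := by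
  have h : PrimrecRel (fun (b e : Edge) => b = e) := Primrec.eq
  exact Primrec.list_length.comp (h.listFilter.comp hf hg)

theorem pr_Pm {f g : α → List Edge} (hf : Primrec f) (hg : Primrec g) :
    PrimrecPred (fun a => Pm (f a) (g a)) := by
  refine pr_ball (P := fun a e => cnt (f a) e = cnt (g a) e) (Primrec.list_append.comp hf hg) ?_
  exact pr_eq (pr_cnt (hf.comp Primrec.fst) Primrec.snd) (pr_cnt (hg.comp Primrec.fst) Primrec.snd)

theorem pr_sing {f : α → List ℕ} (hf : Primrec f) : Primrec (fun a => [(f a).headI]) :=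
  Primrec.list_cons.comp (Primrec.list_headI.comp hf) (Primrec.const [])

theorem pr_Rl {x : α → Inst} {f1 f2 f : α → Fact} (hx : Primrec x) (hf1 : Primrec f1)
    (hf2 : Primrec f2) (hf : Primrec f) : PrimrecPred (fun a => Rl (x a) (f1 a) (f2 a) (f a)) := by
  have R : Primrec (fun a => (x a).1) := Primrec.fst.comp hx
  have c : Primrec (fun a => (f a).1) := Primrec.fst.comp hf
  have r : Primrec (fun a => (f a).2) := Primrec.snd.comp hf
  have w : Primrec (fun a => (f a).2.1) := Primrec.fst.comp r
  have r' : Primrec (fun a => (f a).2.2) := Primrec.snd.comp r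
  have I : Primrec (fun a => (f a).2.2.1) := Primrec.fst.comp r'
  have o : Primrec (fun a => (f a).2.2.2) := Primrec.snd.comp r'
  have h := Primrec.list_headI.comp w
  have s := pr_sing w
  have A := pr_cA c
  have A2 := Primrec.snd.comp A
  have c1 : Primrec (fun a => (f1 a).1) := Primrec.fst.comp hf1
  have r1 : Primrec (fun a => (f1 a).2) := Primrec.snd.comp hf1
  have w1 : Primrec (fun a => (f1 a).2.1) := Primrec.fst.comp r1
  have r1' : Primrec (fun a => (f1 a).2.2) := Primrec.snd.comp r1
  have I1 : Primrec (fun a => (f1 a).2.2.1) := Primrec.fst.comp r1'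
  have o1 : Primrec (fun a => (f1 a).2.2.2) := Primrec.snd.comp r1'
  have h1 := Primrec.list_headI.comp w1
  have J1 := pr_cJ c1
  have A1 := pr_cA c1
  have A11 := Primrec.fst.comp A1
  have A12 := Primrec.snd.comp A1
  have c2 : Primrec (fun a => (f2 a).1) := Primrec.fst.comp hf2
  have r2 : Primrec (fun a => (f2 a).2) := Primrec.snd.comp hf2
  have w2 : Primrec (fun a => (f2 a).2.1) := Primrec.fst.comp r2
  have r2' : Primrec (fun a => (f2 a).2.2) := Primrec.snd.comp r2
  have I2 : Primrec (fun a => (f2 a).2.2.1) := Primrec.fst.comp r2'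
  have o2 : Primrec (fun a => (f2 a).2.2.2) := Primrec.snd.comp r2'
  have h2 := Primrec.list_headI.comp w2
  have nE : Primrec (fun _ : α => ([] : List Edge)) := Primrec.const []
  have nN : Primrec (fun _ : α => ([] : List ℕ)) := Primrec.const []
  have nC : Primrec (fun _ : α => (none : Ctl)) := Primrec.const none
  have isA := pr_eq c1 (pr_act J1 A1)
  have key := pr_eq c (pr_act J1 (Primrec.pair A11 A2))
  refine PrimrecPred.or (pr_eq hf (c.pair (nN.pair (nE.pair c)))) ?_
  refine PrimrecPred.or (pr_eq hf (nC.pair (s.pair (nE.pair nC)))) ?_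
  refine PrimrecPred.or ((pr_eq c (pr_idl (pr_cJ c))).and (pr_eq hf1 (nC.pair r))) ?_
  refine PrimrecPred.or ((pr_eq c (pr_idl (Primrec.succ.comp J1))).and
    (isA.and ((pr_eq r1 r).and ((pr_eq w s).and
      (pr_mem (Primrec.sumInr.comp (Primrec.sumInr.comp (A11.pair (h.pair A12)))) R))))) ?_
  refine PrimrecPred.or (isA.and (key.and ((pr_eq r (s.pair r1')).and
    (pr_mem (Primrec.sumInl.comp ((A2.pair h).pair ((A12.pair w1).pair (Primrec.const none)))) R)))) ?_
  refine PrimrecPred.or (isA.and (key.and ((pr_eq w s).and ((pr_eq o o1).and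
    ((pr_eq hf2 ((pr_idl J1).pair ((pr_sing w2).pair (I2.pair nC)))).and
    ((pr_Pm I (Primrec.list_append.comp I2 I1)).and
    (pr_mem (Primrec.sumInl.comp ((A2.pair h).pair ((A12.pair w1).pair
      (Primrec.option_some.comp h2)))) R))))))) ?_
  refine PrimrecPred.or ((pr_eq c1 (pr_idl J1)).and ((pr_eq c (pr_act J1 A)).and ((pr_eq w s).and
    ((pr_eq o o1).and (pr_bex (P := fun a e => e.1 = cJ (f1 a).1 ∧ e.2.1 = (cA (f a).1).1 ∧
    Pm (f a).2.2.1 (e :: (f1 a).2.2.1) ∧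
    (Sum.inr (Sum.inl (((cA (f a).1).2, (f a).2.1.headI), (e.2.2, (f1 a).2.1))) : RuleE) ∈ (x a).1)
      I ?_))))) ?_
  · have e : Primrec (fun p : α × Edge => p.2) := Primrec.snd
    have e1 : Primrec (fun p : α × Edge => p.2.1) := Primrec.fst.comp e
    have e2 : Primrec (fun p : α × Edge => p.2.2) := Primrec.snd.comp e
    have e21 : Primrec (fun p : α × Edge => p.2.2.1) := Primrec.fst.comp e2
    have e22 : Primrec (fun p : α × Edge => p.2.2.2) := Primrec.snd.comp e2
    have F : Primrec (fun p : α × Edge => p.1) := Primrec.fst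
    exact (pr_eq e1 (J1.comp F)).and ((pr_eq e21 ((Primrec.fst.comp A).comp F)).and
      ((pr_Pm (I.comp F) (Primrec.list_cons.comp e (I1.comp F))).and
      (pr_mem (Primrec.sumInr.comp (Primrec.sumInl.comp
        (((A2.comp F).pair (h.comp F)).pair (e22.pair (w1.comp F))))) (R.comp F))))
  · exact (pr_eq w1 (pr_sing w1)).and ((pr_eq o1 c2).and ((pr_eq c c1).and
      ((pr_eq w (Primrec.list_cons.comp h1 w2)).and ((pr_eq o o2).and
      (pr_Pm I (Primrec.list_append.comp I1 I2))))))

theorem pr_Closed {x : α → Inst} {U S : α → List Fact} (hx : Primrec x) (hU : Primrec U)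
    (hS : Primrec S) : PrimrecPred (fun a => Closed (x a) (U a) (S a)) := by
  have hS' : Primrec (fun a => f0 :: S a) := Primrec.list_cons.comp (Primrec.const f0) hS
  refine pr_ball (P := fun a g => ∀ f1 ∈ f0 :: S a, ∀ f2 ∈ f0 :: S a, Rl (x a) f1 f2 g → g ∈ S a)
    hU ?_
  refine pr_ball (P := fun (p : α × Fact) f1 => ∀ f2 ∈ f0 :: S p.1, Rl (x p.1) f1 f2 p.2 → p.2 ∈ S p.1)
    (hS'.comp Primrec.fst) ?_
  refine pr_ball (P := fun (p : (α × Fact) × Fact) f2 => Rl (x p.1.1) p.2 f2 p.1.2 → p.1.2 ∈ S p.1.1)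
    (hS'.comp (Primrec.fst.comp Primrec.fst)) ?_
  have F : Primrec (fun p : ((α × Fact) × Fact) × Fact => p.1) := Primrec.fst
  have G : Primrec (fun p : ((α × Fact) × Fact) × Fact => p.1.1) := Primrec.fst.comp F
  have A : Primrec (fun p : ((α × Fact) × Fact) × Fact => p.1.1.1) := Primrec.fst.comp G
  exact pr_imp (pr_Rl (hx.comp A) (Primrec.snd.comp F) Primrec.snd (Primrec.snd.comp G))
    (pr_mem (Primrec.snd.comp G) (hS.comp A))

theorem pr_bnd {f : α → ℕ} (hf : Primrec f) : ∀ j, Primrec (fun a => bnd (f a) j)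
  | 0 => Primrec.const 0
  | j + 1 => Primrec.nat_add.comp (pr_bnd hf j)
      (Primrec.nat_mul.comp hf (Primrec.succ.comp (pr_bnd hf j)))

theorem pr_pstep : Primrec₂ pstep := by
  have p : Primrec (fun z : Option (ℕ × ℕ) × Edge => z.1) := Primrec.fst
  have e : Primrec (fun z : Option (ℕ × ℕ) × Edge => z.2) := Primrec.snd
  have b : Primrec (fun z : Option (ℕ × ℕ) × Edge => (z.1.getD (0, 0)).1) :=
    Primrec.fst.comp (Primrec.option_getD.comp p (Primrec.const (0, 0)))
  have e1 := Primrec.fst.comp e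
  have e2 := Primrec.snd.comp e
  refine Primrec.ite (PrimrecPred.and ?_ ?_) ?_ (Primrec.const none)
  · exact Primrec.nat_le.comp e1 b
  · exact pr_eq p (Primrec.option_some.comp (b.pair (Primrec.fst.comp e2)))
  · exact Primrec.option_some.comp (e1.pair (Primrec.snd.comp e2))

theorem pr_path {J : α → List Edge} {s : α → Option (ℕ × ℕ)} (hJ : Primrec J) (hs : Primrec s) :
    Primrec (fun a => (J a).foldl pstep (s a)) :=
  Primrec.list_foldl hJ hs (pr_pstep.comp (Primrec.fst.comp Primrec.snd) (Primrec.snd.comp Primrec.snd)).to₂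

end prim

/-! ## Bounds from encodings -/

def K0 (x : Inst) : ℕ := Encodable.encode x + 1

theorem enc_pair_l {α β : Type*} [Encodable α] [Encodable β] (a : α) (b : β) :
    Encodable.encode a ≤ Encodable.encode (a, b) := by
  rw [Encodable.encode_prod_val]; exact Nat.left_le_pair _ _

theorem enc_pair_r {α β : Type*} [Encodable α] [Encodable β] (a : α) (b : β) :
    Encodable.encode b ≤ Encodable.encode (a, b) := by
  rw [Encodable.encode_prod_val]; exact Nat.right_le_pair _ _

theorem enc_mem {α : Type*} [Encodable α] {a : α} : ∀ {l : List α}, a ∈ l →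
    Encodable.encode a < Encodable.encode l := by
  intro l
  induction l with
  | nil => simp
  | cons b l ih =>
    intro h
    rw [Encodable.encode_list_cons]
    have h1 := Nat.left_le_pair (Encodable.encode b) (Encodable.encode l)
    have h2 := Nat.right_le_pair (Encodable.encode b) (Encodable.encode l)
    rcases List.mem_cons.1 h with rfl | h
    · omega
    · have := ih h; omega

theorem enc_len {α : Type*} [Encodable α] : ∀ l : List α, l.length ≤ Encodable.encode l := by
  intro l
  induction l with
  | nil => simp
  | cons b l ih =>
    rw [Encodable.encode_list_cons, List.length_cons]
    have h2 := Nat.right_le_pair (Encodable.encode b) (Encodable.encode l)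
    omega

theorem Bd_inst (x : Inst) : Bd (instDCPS x) (K0 x) := by
  obtain ⟨l, ⟨q0, γ0⟩, F⟩ := x
  have hl := enc_pair_l l ((q0, γ0), F)
  have hr := enc_pair_r l ((q0, γ0), F)
  have h1 := enc_pair_l (q0, γ0) F
  have h2 := enc_pair_l q0 γ0
  have h3 := enc_pair_r q0 γ0
  simp only [Encodable.encode_nat] at h2 h3
  refine ⟨?_, ?_, ?_, ?_, ?_⟩
  · show q0 < _
    simp only [K0]; omega
  · show γ0 < _
    simp only [K0]; omega
  · intro q γ q' u α h
    have hm := enc_mem (mem_cr.1 h)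
    dsimp only at hm
    rw [Encodable.encode_inl] at hm
    have a1 := enc_pair_r (q, γ) ((q', u), α)
    have a2 := enc_pair_l (q', u) α
    have a3 := enc_pair_l q' u
    have a4 := enc_pair_r q' u
    have a5 := enc_pair_r (q', u) α
    have a6 := enc_len u
    simp only [Encodable.encode_nat] at a3
    simp only [K0]
    refine ⟨by omega, by omega, ?_, ?_⟩
    · intro a ha
      have := enc_mem ha
      simp only [Encodable.encode_nat] at this
      omega
    · rintro a rfl
      rw [Encodable.encode_some] at a5
      simp only [Encodable.encode_nat] at a5
      omega
  · intro q γ q' u h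
    have hm := enc_mem (mem_intr.1 h)
    dsimp only at hm
    rw [Encodable.encode_inr, Encodable.encode_inl] at hm
    have a1 := enc_pair_r (q, γ) (q', u)
    have a3 := enc_pair_l q' u
    have a4 := enc_pair_r q' u
    have a6 := enc_len u
    simp only [Encodable.encode_nat] at a3
    simp only [K0]
    refine ⟨by omega, by omega, ?_⟩
    intro a ha
    have := enc_mem ha
    simp only [Encodable.encode_nat] at this
    omega
  · intro q γ q' h
    have hm := enc_mem (mem_res.1 h)
    dsimp only at hm
    rw [Encodable.encode_inr, Encodable.encode_inr] at hm
    have a1 := enc_pair_l q (γ, q')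
    have a2 := enc_pair_r q (γ, q')
    have a3 := enc_pair_r γ q'
    simp only [Encodable.encode_nat] at a1 a2 a3
    simp only [K0]
    omega

/-! ## The decision procedure -/

def KK (k : ℕ) (x : Inst) : ℕ := K0 x + (k + 2)
def NN (k : ℕ) (x : Inst) : ℕ := bnd (K0 x) (k + 1)
def UU (k : ℕ) (x : Inst) : List Fact := Us (KK k x) (NN k x)

def fin (k : ℕ) (x : Inst) (J : List Edge) : Option (ℕ × ℕ) := J.foldl pstep (some (k, x.2.1.1))

def tgt (k : ℕ) (x : Inst) (J : List Edge) : Fact := (idl (k + 1), [x.2.1.2], J, none)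

def Dec (k : ℕ) (x : Inst) : Prop :=
  ∃ J ∈ lup (Es (KK k x)) (NN k x),
    (∃ q ∈ x.2.2, fin k x J = some (((fin k x J).getD (0, 0)).1, q)) ∧
    ∀ S ∈ lup (UU k x) (UU k x).length, Closed x (UU k x) S → tgt k x J ∈ S

theorem Dec_prim (k : ℕ) : PrimrecPred (Dec k) := by
  have hK0 : Primrec K0 := Primrec.succ.comp Primrec.encode
  have hK : Primrec (KK k) := Primrec.nat_add.comp hK0 (Primrec.const (k + 2))
  have hN : Primrec (NN k) := pr_bnd hK0 (k + 1)
  have hU : Primrec (UU k) := pr_Us hK hN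
  have F : Primrec (fun p : Inst × List Edge => p.1) := Primrec.fst
  have hx2 : Primrec (fun p : Inst × List Edge => p.1.2) := Primrec.snd.comp F
  have hx21 : Primrec (fun p : Inst × List Edge => p.1.2.1) := Primrec.fst.comp hx2
  have hfin : Primrec (fun p : Inst × List Edge => fin k p.1 p.2) :=
    pr_path Primrec.snd (Primrec.option_some.comp ((Primrec.const k).pair (Primrec.fst.comp hx21)))
  have htgt : Primrec (fun p : Inst × List Edge => tgt k p.1 p.2) :=
    (pr_idl (Primrec.const (k + 1))).pair
      ((Primrec.list_cons.comp (Primrec.snd.comp hx21) (Primrec.const [])).pair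
        (Primrec.snd.pair (Primrec.const none)))
  have G : Primrec (fun p : (Inst × List Edge) × List Fact => p.1.1) := F.comp Primrec.fst
  refine pr_bex (P := fun x J => (∃ q ∈ x.2.2, fin k x J = some (((fin k x J).getD (0, 0)).1, q)) ∧
    ∀ S ∈ lup (UU k x) (UU k x).length, Closed x (UU k x) S → tgt k x J ∈ S)
    (pr_lup (pr_Es hK) hN) (PrimrecPred.and ?_ ?_)
  · refine pr_bex (P := fun (p : Inst × List Edge) q =>
      fin k p.1 p.2 = some (((fin k p.1 p.2).getD (0, 0)).1, q)) (Primrec.snd.comp hx2) ?_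
    have hf := hfin.comp (Primrec.fst (β := ℕ))
    exact pr_eq hf (Primrec.option_some.comp
      ((Primrec.fst.comp (Primrec.option_getD.comp hf (Primrec.const (0, 0)))).pair Primrec.snd))
  · refine pr_ball (P := fun (p : Inst × List Edge) S =>
      Closed p.1 (UU k p.1) S → tgt k p.1 p.2 ∈ S)
      (pr_lup (hU.comp F) (Primrec.list_length.comp (hU.comp F))) ?_
    exact pr_imp (pr_Closed G (hU.comp G) Primrec.snd) (pr_mem (htgt.comp Primrec.fst) Primrec.snd)

theorem fin_iff {k : ℕ} {x : Inst} {J : List Edge} {q : ℕ} :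
    fin k x J = some (((fin k x J).getD (0, 0)).1, q) ↔ PathOK (k + 1) (instDCPS x).q0 J q := by
  rw [← path_fold]
  constructor
  · intro h; exact ⟨_, h⟩
  · rintro ⟨b, h⟩
    have h' : fin k x J = some (b, q) := h
    rw [h']; rfl

theorem tgt_iff {k : ℕ} {x : Inst} {J : List Edge} (hJ : J ∈ lup (Es (KK k x)) (NN k x)) :
    (∀ S ∈ lup (UU k x) (UU k x).length, Closed x (UU k x) S → tgt k x J ∈ S) ↔
      LR (instDCPS x) (some (k + 1, none)) [(instDCPS x).γ0] (J : Multiset Edge) := by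
  have hB := Bd_inst x
  have hK : K0 x < KK k x := by simp only [KK]; omega
  rw [D_iff_LR]
  refine (D_iff_closed hB hK (f := tgt k x J) ?_).symm
  have hg : x.2.1.2 < K0 x := hB.γ0
  refine mem_Us.2 ⟨Cs_idle.2 (by simp only [KK]; omega), ?_, mem_lup.1 hJ, Cs_none⟩
  simp only [List.length_singleton, List.mem_singleton, forall_eq]
  omega

theorem Dec_iff (k : ℕ) (x : Inst) :
    Dec k x ↔ ∃ q ∈ x.2.2, KStratifiedReachable (instDCPS x) k q := by
  constructor
  · rintro ⟨J, hJ, ⟨q, hq, h1⟩, h2⟩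
    exact ⟨q, hq, KStrat_iff_LR.2 ⟨J, fin_iff.1 h1, (tgt_iff hJ).1 h2⟩⟩
  · rintro ⟨q, hq, h⟩
    obtain ⟨J, h1, h2, h3⟩ := bounded (Bd_inst x) (KStrat_iff_LR.1 h)
    have hJ : J ∈ lup (Es (KK k x)) (NN k x) := by
      refine mem_lup.2 ⟨h3, ?_⟩
      rintro ⟨a, b, c⟩ he
      have h4 := h1.2.2 _ he
      have h5 := h2.bd (Bd_inst x) trivial _ (Multiset.mem_coe.2 he)
      simp only at h4 h5
      exact mem_Es.2 ⟨by simp only [KK]; omega, by simp only [KK]; omega, by simp only [KK]; omega⟩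
    exact ⟨J, hJ, ⟨q, hq, fin_iff.2 h1⟩, (tgt_iff hJ).2 h2⟩

/-- For every `k`, the `k`-stratified state reachability problem for
DCPSs is decidable: there is an algorithm which, given a DCPS `M` and a target set
`F`, decides whether some `q ∈ F` is `k`-stratified reachable by `M`. -/
theorem ssrK_decidable (k : ℕ) :
    ComputablePred (fun x : Inst => ∃ q ∈ x.2.2, KStratifiedReachable (instDCPS x) k q) := by
  obtain ⟨i, h⟩ := (Dec_prim k).of_eq (Dec_iff k)
  exact ⟨i, h.to_comp⟩

end DCPSFormal
end

section
/- Let M=(Q,Γ,Δ,q₀,γ₀) be a DCPS, (q,γ)∈Q×Γ, and P_{(q,γ)} the thread PDA constructed from M and (q,γ). For all j∈ℕ, p₁,p₂∈Q, w₁,w₂∈Γ*, and finitely supported functions Val,Val' from local configurations to ℕ: there is a run (p₁,(w₁,j),Val)→*(p₂,(w₂,j),Val+Val') in T_{{j}}(M) if and only if there is a word σ∈Γ* such that (p₁,w₁)→*(p₂,w₂) in T(P_{(q,γ)}) via a run labelled σ, Val'((γ',j+1))=|σ|_{γ'} for every γ'∈Γ, and Val' equals 0 on every local configuration not of the form (γ',j+1)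 with γ'∈Γ. -/
namespace DCPSFormal

/-- Input letters of the thread PDA: either a stack symbol of a spawned thread, or a
context-switch guess `(q, α, q')` with `α ∈ Γ ∪ {ε}`. -/
abbrev TLbl (Q Γ : Type*) := Γ ⊕ (Q × Option Γ × Q)

/-- The transitions of the thread PDA `P_{(q,γ)}` constructed from a DCPS `M`
(states are `Q ⊕ (Q × Γ)`). -/
inductive TTrans {Q Γ : Type*} (M : DCPS Q Γ) :
    (((Q ⊕ (Q × Γ)) × Γ) × Option (TLbl Q Γ) × ((Q ⊕ (Q × Γ)) × List Γ)) → Prop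
  | cr {q₁ γ₁ q₂ u α} : Rule.cr q₁ γ₁ q₂ u α ∈ M.rules →
      TTrans M ((.inl q₁, γ₁), α.map Sum.inl, (.inl q₂, u))
  | intrE {q₁ γ₁ q₂ u} (q₂' : Q) : Rule.intr q₁ γ₁ q₂ u ∈ M.rules →
      TTrans M ((.inl q₁, γ₁), some (.inr (q₂, none, q₂')), (.inl q₂', u))
  | intrG {q₁ γ₁ q₂ u} (q₂' : Q) (γ' : Γ) : Rule.intr q₁ γ₁ q₂ u ∈ M.rules →
      TTrans M ((.inl q₁, γ₁), some (.inr (q₂, some γ', q₂')), (.inr (q₂', γ'), u))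
  | resumeEps {q₁ γ₁ q₂ u} (q₂' : Q) (γ' : Γ) : Rule.intr q₁ γ₁ q₂ u ∈ M.rules →
      TTrans M ((.inr (q₂', γ'), γ'), none, (.inl q₂', [γ']))

/-- The thread PDA `P_{(q,γ)}` constructed from a DCPS `M` and `(q,γ) ∈ Q × Γ`. -/
def threadPDA {Q Γ : Type*} (M : DCPS Q Γ) (q : Q) (γ : Γ) :
    PDA (Q ⊕ (Q × Γ)) (TLbl Q Γ) Γ where
  trans := { t | TTrans M t }
  p0 := .inl q
  γ0 := γ
  final := { s | ∃ p : Q, s = .inl p }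

noncomputable def nIdle {Γ : Type} (j : ℕ) : ((List Γ × ℕ) →₀ ℕ) →+ ℕ :=
  Finsupp.liftAddHom (fun l => if l.2 = j then AddMonoidHom.id ℕ else 0)

lemma nIdle_single {Γ : Type} (j : ℕ) (l : List Γ × ℕ) :
    nIdle j (Finsupp.single l 1) = if l.2 = j then 1 else 0 := by
  unfold nIdle
  rw [Finsupp.liftAddHom_apply_single]
  split_ifs <;> rfl

lemma nIdle_spawn {Γ : Type} (j : ℕ) (α : Option Γ) : nIdle j (spawnOf α j) = 0 := by
  cases α with
  | none => simp [spawnOf]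
  | some a => simp [spawnOf, nIdle_single]

noncomputable def wordVal {Γ : Type} (j : ℕ) (σ : List Γ) : (List Γ × ℕ) →₀ ℕ :=
  (σ.map (fun a => Finsupp.single (([a] : List Γ), j + 1) 1)).sum

lemma wordVal_cons {Γ : Type} (j : ℕ) (a : Γ) (σ : List Γ) :
    wordVal j (a :: σ) = spawnOf (some a) j + wordVal j σ := by
  simp [wordVal, spawnOf]

lemma wordVal_count {Γ : Type} [DecidableEq Γ] (j : ℕ) (σ : List Γ) (g : Γ) :
    wordVal j σ ([g], j + 1) = σ.count g := by
  induction σ with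
  | nil => simp [wordVal]
  | cons a σ ih =>
    rw [wordVal_cons, Finsupp.add_apply, ih, List.count_cons]
    simp only [spawnOf, Finsupp.single_apply]
    by_cases h : a = g <;> simp [h, add_comm]

lemma wordVal_zero {Γ : Type} (j : ℕ) (σ : List Γ) (l : List Γ × ℕ)
    (hl : ¬ ∃ g : Γ, l = ([g], j + 1)) : wordVal j σ l = 0 := by
  induction σ with
  | nil => simp [wordVal]
  | cons a σ ih =>
    classical
    rw [wordVal_cons, Finsupp.add_apply, ih, spawnOf, Finsupp.single_apply, if_neg]
    intro h
    exact hl ⟨a, h.symm⟩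

lemma wordVal_eq {Γ : Type} [DecidableEq Γ] (j : ℕ) (σ : List Γ) (V : (List Γ × ℕ) →₀ ℕ)
    (h1 : ∀ g : Γ, V ([g], j + 1) = σ.count g)
    (h2 : ∀ l : List Γ × ℕ, (¬ ∃ g : Γ, l = ([g], j + 1)) → V l = 0) :
    V = wordVal j σ := by
  ext l
  by_cases hl : ∃ g : Γ, l = ([g], j + 1)
  · obtain ⟨g, rfl⟩ := hl
    rw [h1, wordVal_count]
  · rw [h2 l hl, wordVal_zero j σ l hl]

lemma fwd {Q Γ : Type} (M : DCPS Q Γ) (q : Q) (γ : Γ) (j : ℕ) (p₂ : Q) (w₂ : List Γ)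
    (V₂ : (List Γ × ℕ) →₀ ℕ) (c : Config Q Γ)
    (h : ReachesIn M {j} c ⟨p₂, some (w₂, j), V₂⟩) :
    nIdle j V₂ ≤ nIdle j c.idle ∧ (c.active = none → nIdle j V₂ < nIdle j c.idle) ∧
    (∀ w, c.active = some (w, j) → nIdle j V₂ = nIdle j c.idle →
      ∃ σ : List Γ, PDATrace (threadPDA M q γ) (σ.map Sum.inl) (.inl c.state, w) (.inl p₂, w₂) ∧
        V₂ = c.idle + wordVal j σ) := by
  induction h using Relation.ReflTransGen.head_induction_on with
  | refl =>
    refine ⟨le_rfl, by simp, ?_⟩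
    intro w hw _
    simp only [Option.some.injEq, Prod.mk.injEq, and_true] at hw
    subst hw
    exact ⟨[], PDATrace.nil _, by simp [wordVal]⟩
  | head hs _ ih =>
    obtain ⟨r, hst, hact⟩ := hs
    obtain ⟨ih1, ih2, ih3⟩ := ih
    cases hst with
    | @cr q₁ g q' u α w i V hr =>
      have hi : i = j := by
        rcases hact with ⟨_, _, h1, h2⟩ | ⟨_, _, h1, h2⟩ <;>
        · simp only [Option.some.injEq, Prod.mk.injEq] at h1
          exact h1.2.trans h2
      subst hi
      simp only [map_add, nIdle_spawn, add_zero] at ih1 ih2 ih3 ⊢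
      refine ⟨ih1, by simp, ?_⟩
      intro w' hw' hN
      simp only [Option.some.injEq, Prod.mk.injEq, and_true] at hw'
      subst hw'
      obtain ⟨σ, ht, hV⟩ := ih3 _ rfl hN
      have hstep : PDAStep (threadPDA M q γ) (α.map Sum.inl) (.inl q₁, g :: w)
          (.inl q', u ++ w) := PDAStep.mk (TTrans.cr hr)
      cases α with
      | none => exact ⟨σ, PDATrace.eps hstep ht, by rw [hV]; simp [spawnOf]⟩
      | some a =>
        exact ⟨a :: σ, PDATrace.cons hstep ht, by rw [hV, wordVal_cons, add_assoc]⟩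
    | @intr q₁ g q' u w i V hr =>
      have hi : i = j := by
        rcases hact with ⟨_, _, h1, h2⟩ | ⟨_, _, h1, h2⟩
        · simp only [Option.some.injEq, Prod.mk.injEq] at h1
          exact h1.2.trans h2
        · simp at h1
      subst hi
      have h2 := ih2 rfl
      simp [map_add, nIdle_single] at h2
      refine ⟨h2.le, by simp, ?_⟩
      intro _ _ h
      exact absurd h h2.ne
    | @res q₁ g q' w i V hr =>
      have hi : i = j := by
        rcases hact with ⟨_, _, h1, h2⟩ | ⟨_, _, h1, h2⟩
        · simp at h1
        · simp only [Option.some.injEq, Prod.mk.injEq] at h1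
          exact h1.2.trans h2
      subst hi
      simp only [map_add, nIdle_single, if_true] at ih1 ⊢
      refine ⟨by omega, fun _ => by omega, by simp⟩

lemma bwd {Q Γ : Type} (M : DCPS Q Γ) (q : Q) (γ : Γ) (j : ℕ) (p₂ : Q) (w₂ : List Γ)
    (v : List (TLbl Q Γ)) (c d : (Q ⊕ (Q × Γ)) × List Γ)
    (h : PDATrace (threadPDA M q γ) v c d) :
    ∀ (σ : List Γ) (p₁ : Q) (w₁ : List Γ) (V : (List Γ × ℕ) →₀ ℕ), v = σ.map Sum.inl →
      c = (.inl p₁, w₁) → d = (.inl p₂, w₂) →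
      ReachesIn M {j} ⟨p₁, some (w₁, j), V⟩ ⟨p₂, some (w₂, j), V + wordVal j σ⟩ := by
  have key : ∀ (p₁ p' : Q) (g : Γ) (u w : List Γ) (α : Option Γ) (V W : (List Γ × ℕ) →₀ ℕ),
      Rule.cr p₁ g p' u α ∈ M.rules →
      ReachesIn M {j} ⟨p', some (u ++ w, j), V + spawnOf α j⟩ ⟨p₂, some (w₂, j), W⟩ →
      ReachesIn M {j} ⟨p₁, some (g :: w, j), V⟩ ⟨p₂, some (w₂, j), W⟩ := by
    intro p₁ p' g u w α V W hr h
    exact Relation.ReflTransGen.head ⟨_, Step.cr hr, Or.inl ⟨_, _, rfl, rfl⟩⟩ h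
  induction h with
  | nil c =>
    intro σ p₁ w₁ V hσ hc hd
    subst hc
    obtain rfl : σ = [] := by simpa using hσ.symm
    simp only [Prod.mk.injEq, Sum.inl.injEq] at hd
    obtain ⟨rfl, rfl⟩ := hd
    simp only [wordVal, List.map_nil, List.sum_nil, add_zero]
    exact Relation.ReflTransGen.refl
  | eps hs _ ih =>
    intro σ p₁ w₁ V hσ hc hd
    subst hc
    generalize ho : (none : Option (TLbl Q Γ)) = o at hs
    cases hs with
    | mk ht =>
      change TTrans M _ at ht
      cases ht with
      | @cr _ _ _ _ α hr =>
        cases α with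
        | none => exact key _ _ _ _ _ none _ _ hr (by simpa [spawnOf] using ih σ _ _ V hσ rfl hd)
        | some a => simp at ho
      | intrE _ _ => simp at ho
      | intrG _ _ _ => simp at ho
  | cons hs _ ih =>
    rename_i a v _ _ _ _
    intro σ p₁ w₁ V hσ hc hd
    subst hc
    cases σ with
    | nil => simp at hσ
    | cons b σ =>
      simp only [List.map_cons, List.cons.injEq] at hσ
      obtain ⟨rfl, hσ⟩ := hσ
      generalize ho : (some (Sum.inl b) : Option (TLbl Q Γ)) = o at hs
      cases hs with
      | mk ht =>
        change TTrans M _ at ht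
        cases ht with
        | @cr _ _ _ _ α hr =>
          cases α with
          | none => simp at ho
          | some a =>
            simp only [Option.map_some, Option.some.injEq, Sum.inl.injEq] at ho
            subst ho
            rw [wordVal_cons, ← add_assoc]
            exact key _ _ _ _ _ (some b) _ _ hr (ih σ _ _ _ hσ rfl hd)
        | intrE _ _ => simp at ho
        | intrG _ _ _ => simp at ho

/-- A run of a single thread of the DCPS `M` in `T_{{j}}(M)` from
`(p₁,(w₁,j),Val)` to `(p₂,(w₂,j),Val+Val')` corresponds exactly to a run of the thread
PDA `P_{(q,γ)}` from `(p₁,w₁)` to `(p₂,w₂)` labelled by a word `σ ∈ Γ*` whose letter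
counts describe `Val'`. -/
theorem thread_pda_characterization
    (Q Γ : Type) [Fintype Q] [Fintype Γ] [DecidableEq Γ]
    (M : DCPS Q Γ) (hwf : IsDCPSWf M) (hfin : M.rules.Finite)
    (q : Q) (γ : Γ) (j : ℕ) (p₁ p₂ : Q) (w₁ w₂ : List Γ)
    (Val Val' : (List Γ × ℕ) →₀ ℕ) :
    ReachesIn M {j} ⟨p₁, some (w₁, j), Val⟩ ⟨p₂, some (w₂, j), Val + Val'⟩ ↔
    ∃ σ : List Γ,
      PDATrace (threadPDA M q γ) (σ.map Sum.inl) (.inl p₁, w₁) (.inl p₂, w₂) ∧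
      (∀ γ' : Γ, Val' ([γ'], j + 1) = σ.count γ') ∧
      (∀ loc : List Γ × ℕ, (¬ ∃ γ' : Γ, loc = ([γ'], j + 1)) → Val' loc = 0) := by
  constructor
  · intro h
    obtain ⟨h1, -, h3⟩ := fwd M q γ j p₂ w₂ _ _ h
    simp only [map_add] at h1 h3
    obtain ⟨σ, ht, hV⟩ := h3 w₁ rfl (by omega)
    have hV' : Val' = wordVal j σ := add_left_cancel hV
    subst hV'
    exact ⟨σ, ht, wordVal_count j σ, wordVal_zero j σ⟩
  · rintro ⟨σ, ht, h1, h2⟩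
    rw [wordVal_eq j σ Val' h1 h2]
    exact bwd M q γ j p₂ w₂ _ _ _ ht σ p₁ w₁ Val rfl rfl rfl

end DCPSFormal
end
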